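/- arXiv:math/0502170 — 12 statements merged into one kernel-verified Lean document; each statement's English description precedes it below -/
import Mathlib

section
/- Let k > -1/2 be a real number, let a1, a2, a3 be real numbers, and let λ1, λ2, λ3, λ4 > 0. Define α = (1-k)a1, β = (1+2k)a3, and γ = (k+2)a2 - (1+2k)a1a3. Then the three quantities βγλ2 + (k-1)αλ3, (2+k)γ, and αγλ1 + (1+2k)βλ2 all vanish if and only if a2 = 0, a3 = 0, and (k = 1 or a1 = 0). (This is the algebraic content of Proposition 1: for the class U1[1,1,1], a diagonal initial metric remains diagonal under Ricci flow if and only if a1 = a2 = a3 = 0 when k ≠ 1, and if and only if a2 = a3 = 0 when k = 1.) -/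
/-!
With `Y₁ = X₁`, `Y₂ = X₂ + a1 X₁`, `Y₃ = X₃ + a3 X₂ + a2 X₁`, the brackets become
`[Y₂, X₄] = k Y₂ + α Y₁` and `[Y₃, X₄] = -(k + 1) Y₃ + β Y₂ + γ Y₁`, so `α`, `β`, `γ` measure how
far `ad X₄` is from being diagonal. The vanishing of the Ricci components can be solved in the order
`γ`, `β`, `α`: the second is a multiple of `γ`, the third reduces to a multiple of `β` once `γ = 0`,
and the first then reduces to a multiple of `(k - 1) * α`. The factors `1 - k`, `1 + 2 * k` and
`k + 2` are the differences of the coefficients `1`, `k`, `-(k + 1)` in the original brackets.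
-/

variable {R : Type*} [Ring R] [NoZeroDivisors R]

theorem ricci_offDiag_eq_zero_iff {p q r l1 l2 l3 α β γ : R}
    (hq : q ≠ 0) (hr : r ≠ 0) (hl2 : l2 ≠ 0) (hl3 : l3 ≠ 0) :
    (β * γ * l2 + p * α * l3 = 0 ∧ q * γ = 0 ∧ α * γ * l1 + r * β * l2 = 0) ↔
      (p = 0 ∨ α = 0) ∧ β = 0 ∧ γ = 0 := by
  constructor
  · rintro ⟨h12, h13, h23⟩
    obtain rfl : γ = 0 := (mul_eq_zero_iff_left hq).mp h13
    obtain rfl : β = 0 := by simpa [hr, hl2] using h23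
    have hpα : p = 0 ∨ α = 0 := by simpa [hl3] using h12
    exact ⟨hpα, rfl, rfl⟩
  · rintro ⟨hpα, rfl, rfl⟩
    simp [mul_eq_zero.mpr hpα]

theorem mul_eq_zero_and_mul_sub_mul_mul_eq_zero_iff {q r a1 a2 a3 : R}
    (hq : q ≠ 0) (hr : r ≠ 0) :
    (r * a3 = 0 ∧ q * a2 - r * a1 * a3 = 0) ↔ (a2 = 0 ∧ a3 = 0) := by
  rw [mul_eq_zero_iff_left hr, and_comm (a := a2 = 0)]
  refine and_congr_right ?_
  rintro rfl
  rw [mul_zero, sub_zero, mul_eq_zero_iff_left hq]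

theorem stmt0_general {k a1 a2 a3 l1 l2 l3 α β γ : R}
    (hk₁ : 1 + 2 * k ≠ 0) (hk₂ : 2 + k ≠ 0) (hl2 : l2 ≠ 0) (hl3 : l3 ≠ 0)
    (hα : α = (1 - k) * a1)
    (hβ : β = (1 + 2 * k) * a3)
    (hγ : γ = (k + 2) * a2 - (1 + 2 * k) * a1 * a3) :
    (β * γ * l2 + (k - 1) * α * l3 = 0 ∧
      (2 + k) * γ = 0 ∧
      α * γ * l1 + (1 + 2 * k) * β * l2 = 0) ↔
    (a2 = 0 ∧ a3 = 0 ∧ (k = 1 ∨ a1 = 0)) := by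
  have hα_iff : (k - 1 = 0 ∨ α = 0) ↔ (k = 1 ∨ a1 = 0) := by
    rw [hα, mul_eq_zero, sub_eq_zero, sub_eq_zero, eq_comm (a := 1), ← or_assoc, or_self]
  have hβγ_iff : (β = 0 ∧ γ = 0) ↔ (a2 = 0 ∧ a3 = 0) := by
    rw [hβ, hγ, add_comm k 2]
    exact mul_eq_zero_and_mul_sub_mul_mul_eq_zero_iff hk₂ hk₁
  rw [ricci_offDiag_eq_zero_iff hk₂ hk₁ hl2 hl3, hα_iff, hβγ_iff, and_comm, and_assoc]

/-- Proposition 1 (class U1[1,1,1]): the off-diagonal Ricci components of a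
diagonal metric vanish iff `a2 = 0`, `a3 = 0` and (`k = 1` or `a1 = 0`). -/
theorem stmt0 (k a1 a2 a3 l1 l2 l3 l4 α β γ : ℝ)
    (hk : -(1 / 2) < k)
    (hl1 : 0 < l1) (hl2 : 0 < l2) (hl3 : 0 < l3) (hl4 : 0 < l4)
    (hα : α = (1 - k) * a1)
    (hβ : β = (1 + 2 * k) * a3)
    (hγ : γ = (k + 2) * a2 - (1 + 2 * k) * a1 * a3) :
    (β * γ * l2 + (k - 1) * α * l3 = 0 ∧
      (2 + k) * γ = 0 ∧
      α * γ * l1 + (1 + 2 * k) * β * l2 = 0) ↔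
    (a2 = 0 ∧ a3 = 0 ∧ (k = 1 ∨ a1 = 0)) :=
  stmt0_general (by linarith) (by linarith) hl2.ne' hl3.ne' hα hβ hγ
end

section
/- Let k be a real number, let a1, a2, a3 be real numbers, and let λ1, λ2, λ3, λ4 > 0. Define α = a2, β = a2a3 - a1a2² - a1 - 3ka3, and γ = a3 - 3ka1 - a1a2. Then the three quantities 2αλ1 + 2α(1+α²)λ2 + βγλ3, γλ1 + (α-3k)βλ2, and (α+3k)γλ1 + (1+α²)βλ2 all vanish if and only if a1 = a2 = a3 = 0. (This is the algebraic content of Proposition 2 for the class U1[Z,Z̄,1]: a diagonal initial metric remains diagonal under Ricci flow if and only if a1 = a2 = a3 = 0.) -/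
/-!
Put `M = !![1, α - 3k; α + 3k, 1 + α²]`. The second and third quantities form the vector
`M (γλ₁, βλ₂)`, and `(γ, β) = Mᵀ (a₃, -a₁)`, so they vanish together exactly when
`M diag(λ₁, λ₂) Mᵀ` annihilates `(a₃, -a₁)`. Since `det M = 1 + 9k²` is positive whatever `α` is,
this forces `a₁ = a₃ = 0`. Then `β = γ = 0`, and the first quantity reduces to
`2α(λ₁ + (1 + α²)λ₂)`, which vanishes only for `α = a₂ = 0`.
-/

section CommRing

open Matrix

variable {R : Type*} [CommRing R]

theorem mul_diagonal_mul_transpose_mulVec_eq_zero_iff [IsDomain R] {n : Type*} [Fintype n]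
    [DecidableEq n] {A : Matrix n n R} (hA : A.det ≠ 0) {d : n → R} (hd : ∀ i, d i ≠ 0)
    {v : n → R} : (A * diagonal d * Aᵀ) *ᵥ v = 0 ↔ v = 0 := by
  have hdet : (A * diagonal d * Aᵀ).det ≠ 0 := by
    rw [det_mul, det_mul, det_transpose, det_diagonal]
    exact mul_ne_zero (mul_ne_zero hA (Finset.prod_ne_zero_iff.mpr fun i _ ↦ hd i)) hA
  exact ⟨eq_zero_of_mulVec_eq_zero hdet, fun hv ↦ by rw [hv, mulVec_zero]⟩

/-- The matrix `M` coupling the mixed Ricci components `Ric(Ȳ₁, Ȳ₃)`, `Ric(Ȳ₂, Ȳ₃)` to the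
transformation parameters: up to nonzero multiples, these components are the entries of
`M * diagonal ![λ₁, λ₂] * Mᵀ` applied to `(a₃, -a₁)`, with `a = a₂`. -/
def couplingMatrix (k a : R) : Matrix (Fin 2) (Fin 2) R :=
  !![1, a - 3 * k; a + 3 * k, 1 + a ^ 2]

theorem det_couplingMatrix (k a : R) : (couplingMatrix k a).det = 1 + 9 * k ^ 2 := by
  rw [couplingMatrix, det_fin_two_of]
  ring

theorem transpose_couplingMatrix_mulVec (k a x y : R) :
    (couplingMatrix k a)ᵀ *ᵥ ![x, y] =
      ![x + (a + 3 * k) * y, (a - 3 * k) * x + (1 + a ^ 2) * y] := by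
  ext i
  fin_cases i <;> simp [couplingMatrix, mulVec, dotProduct, Fin.sum_univ_two]

theorem couplingMatrix_mul_diagonal_mulVec (k a l1 l2 γ β : R) :
    (couplingMatrix k a * diagonal ![l1, l2]) *ᵥ ![γ, β] =
      ![γ * l1 + (a - 3 * k) * β * l2, (a + 3 * k) * γ * l1 + (1 + a ^ 2) * β * l2] := by
  ext i
  fin_cases i <;> simp [couplingMatrix, mulVec, dotProduct, Fin.sum_univ_two] <;> ring

theorem mixed_ricci_eq_zero_iff [IsDomain R] {k a1 a2 a3 l1 l2 β γ : R}
    (hk : 1 + 9 * k ^ 2 ≠ 0) (hl1 : l1 ≠ 0) (hl2 : l2 ≠ 0)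
    (hβ : β = a2 * a3 - a1 * a2 ^ 2 - a1 - 3 * k * a3)
    (hγ : γ = a3 - 3 * k * a1 - a1 * a2) :
    (γ * l1 + (a2 - 3 * k) * β * l2 = 0 ∧
      (a2 + 3 * k) * γ * l1 + (1 + a2 ^ 2) * β * l2 = 0) ↔ (a1 = 0 ∧ a3 = 0) := by
  have hγβ : (couplingMatrix k a2)ᵀ *ᵥ ![a3, -a1] = ![γ, β] := by
    have hγ' : a3 + (a2 + 3 * k) * -a1 = γ := by linear_combination -hγ
    have hβ' : (a2 - 3 * k) * a3 + (1 + a2 ^ 2) * -a1 = β := by linear_combination -hβ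
    rw [transpose_couplingMatrix_mulVec, hγ', hβ']
  have hdet : (couplingMatrix k a2).det ≠ 0 := by rwa [det_couplingMatrix]
  have hl : ∀ i, ![l1, l2] i ≠ 0 := Fin.forall_fin_two.mpr ⟨hl1, hl2⟩
  have hker := mul_diagonal_mul_transpose_mulVec_eq_zero_iff hdet hl (v := ![a3, -a1])
  rw [← mulVec_mulVec, hγβ, couplingMatrix_mul_diagonal_mulVec] at hker
  simpa [and_comm] using hker

end CommRing

theorem stmt1_general {R : Type*} [CommRing R] [LinearOrder R] [IsStrictOrderedRing R]
    (k a1 a2 a3 l1 l2 l3 α β γ : R) (hl1 : 0 < l1) (hl2 : 0 < l2)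
    (hα : α = a2)
    (hβ : β = a2 * a3 - a1 * a2 ^ 2 - a1 - 3 * k * a3)
    (hγ : γ = a3 - 3 * k * a1 - a1 * a2) :
    (2 * α * l1 + 2 * α * (1 + α ^ 2) * l2 + β * γ * l3 = 0 ∧
      γ * l1 + (α - 3 * k) * β * l2 = 0 ∧
      (α + 3 * k) * γ * l1 + (1 + α ^ 2) * β * l2 = 0) ↔
    (a1 = 0 ∧ a2 = 0 ∧ a3 = 0) := by
  subst hα
  have hk : 1 + 9 * k ^ 2 ≠ 0 := by positivity
  rw [mixed_ricci_eq_zero_iff hk hl1.ne' hl2.ne' hβ hγ, and_left_comm]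
  refine and_congr_right fun ha1 ↦ and_congr_left fun ha3 ↦ ?_
  have hγ0 : γ = 0 := by simp [hγ, ha1, ha3]
  have hfactor : 2 * α * l1 + 2 * α * (1 + α ^ 2) * l2 + β * γ * l3 =
      α * (2 * (l1 + (1 + α ^ 2) * l2)) := by
    rw [hγ0]
    ring
  have hpos : 2 * (l1 + (1 + α ^ 2) * l2) ≠ 0 := by positivity
  rw [hfactor, mul_eq_zero_iff_right hpos]

/-- Proposition 2 (class U1[Z,Z̄,1]): the off-diagonal Ricci components of a
diagonal metric vanish iff `a1 = a2 = a3 = 0`. -/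
theorem stmt1 (k a1 a2 a3 l1 l2 l3 l4 α β γ : ℝ)
    (hl1 : 0 < l1) (hl2 : 0 < l2) (hl3 : 0 < l3) (hl4 : 0 < l4)
    (hα : α = a2)
    (hβ : β = a2 * a3 - a1 * a2 ^ 2 - a1 - 3 * k * a3)
    (hγ : γ = a3 - 3 * k * a1 - a1 * a2) :
    (2 * α * l1 + 2 * α * (1 + α ^ 2) * l2 + β * γ * l3 = 0 ∧
      γ * l1 + (α - 3 * k) * β * l2 = 0 ∧
      (α + 3 * k) * γ * l1 + (1 + α ^ 2) * β * l2 = 0) ↔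
    (a1 = 0 ∧ a2 = 0 ∧ a3 = 0) :=
  stmt1_general k a1 a2 a3 l1 l2 l3 α β γ hl1 hl2 hα hβ hγ
end

section
/- Let k ∈ ℝ and λ1, λ2, λ4 > 0. Suppose A, B, D : [0,∞) → ℝ are differentiable, strictly positive, and satisfy A' = -(A² - B²)/(BD), B' = -(B² - A²)/(AD), D' = ((A - B)² + 12k²AB)/(AB), with A(0) = λ1, B(0) = λ2, D(0) = λ4. Then A(t)B(t) = λ1λ2 for all t ≥ 0, and (A - B)'(t) = -((A(t)+B(t))²/(A(t)B(t)D(t)))·(A(t) - B(t)); in particular |A(t) - B(t)| is nonincreasing in t, and if λ1 = λ2 then A(t) = B(t) = λ1 for all t ≥ 0. -/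
/-! The equations say `A' = -φ A` and `B' = φ B` with `φ = (A² - B²) / (ABD)`, so the logarithmic
derivatives of `A` and `B` cancel and `AB` is conserved. Subtracting them instead gives
`(A - B)' = -c (A - B)` with `c = (A + B)² / (ABD) ≥ 0`, so `(A - B)²` decreases; if it vanishes
initially it vanishes forever, and then `A² = AB` is constant. -/

open Set

theorem antitoneOn_norm_of_inner_hasDerivWithinAt_nonpos {E : Type*} [NormedAddCommGroup E]
    [InnerProductSpace ℝ E] {u u' : ℝ → E} {J : Set ℝ} (hJ : Convex ℝ J)
    (hu : ∀ t ∈ J, HasDerivWithinAt u (u' t) J t)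
    (hu' : ∀ t ∈ interior J, inner ℝ (u t) (u' t) ≤ 0) :
    AntitoneOn (fun t => ‖u t‖) J := by
  have hderiv : ∀ t ∈ J, HasDerivWithinAt (fun s => ‖u s‖ ^ 2) (2 * inner ℝ (u t) (u' t)) J t :=
    fun t ht => (hu t ht).norm_sq
  have hsq : AntitoneOn (fun t => ‖u t‖ ^ 2) J :=
    antitoneOn_of_hasDerivWithinAt_nonpos hJ (fun t ht => (hderiv t ht).continuousWithinAt)
      (fun t ht => (hderiv t (interior_subset ht)).mono interior_subset)
      (fun t ht => mul_nonpos_of_nonneg_of_nonpos zero_le_two (hu' t ht))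
  exact fun s hs t ht hst => (sq_le_sq₀ (norm_nonneg _) (norm_nonneg _)).mp (hsq hs ht hst)

/-- At time `t`, the metric components `A`, `B` and `D` are positive and `A`, `B` satisfy their
Ricci flow equations on the class U1[Z,Z̄,1], with derivatives taken within the set of times `S`;
`D` enters as a given coefficient. The choices `S = [0, ∞)` and `S = ℝ` give the one-sided and the
two-sided derivative at the initial time. -/
structure IsABRicciFlowWithinAt (A B D : ℝ → ℝ) (S : Set ℝ) (t : ℝ) : Prop where
  pos_A : 0 < A t
  pos_B : 0 < B t
  pos_D : 0 < D t
  hasDerivWithinAt_A : HasDerivWithinAt A (-(A t ^ 2 - B t ^ 2) / (B t * D t)) S t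
  hasDerivWithinAt_B : HasDerivWithinAt B (-(B t ^ 2 - A t ^ 2) / (A t * D t)) S t

namespace IsABRicciFlowWithinAt

variable {A B D : ℝ → ℝ} {J S : Set ℝ} {s t : ℝ}

theorem mono (h : IsABRicciFlowWithinAt A B D S t) (hJS : J ⊆ S) :
    IsABRicciFlowWithinAt A B D J t where
  __ := h
  hasDerivWithinAt_A := h.hasDerivWithinAt_A.mono hJS
  hasDerivWithinAt_B := h.hasDerivWithinAt_B.mono hJS

theorem hasDerivWithinAt_mul (h : IsABRicciFlowWithinAt A B D S t) :
    HasDerivWithinAt (fun x => A x * B x) 0 S t := by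
  have hA := h.pos_A.ne'
  have hB := h.pos_B.ne'
  refine (h.hasDerivWithinAt_A.fun_mul h.hasDerivWithinAt_B).congr_deriv ?_
  field_simp
  ring

theorem hasDerivWithinAt_sub (h : IsABRicciFlowWithinAt A B D S t) :
    HasDerivWithinAt (fun x => A x - B x)
      (-((A t + B t) ^ 2 / (A t * B t * D t)) * (A t - B t)) S t := by
  have hA := h.pos_A.ne'
  have hB := h.pos_B.ne'
  refine (h.hasDerivWithinAt_A.fun_sub h.hasDerivWithinAt_B).congr_deriv ?_
  field_simp
  ring

theorem mul_eq_mul (hJ : Convex ℝ J) (h : ∀ x ∈ J, IsABRicciFlowWithinAt A B D J x)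
    (hs : s ∈ J) (ht : t ∈ J) : A t * B t = A s * B s := by
  have hbound : ‖A t * B t - A s * B s‖ ≤ 0 * ‖t - s‖ :=
    hJ.norm_image_sub_le_of_norm_hasDerivWithin_le (fun x hx => (h x hx).hasDerivWithinAt_mul)
      (fun _ _ => norm_zero.le) hs ht
  rw [zero_mul] at hbound
  exact sub_eq_zero.mp (norm_le_zero_iff.mp hbound)

theorem antitoneOn_abs_sub (hJ : Convex ℝ J) (h : ∀ x ∈ J, IsABRicciFlowWithinAt A B D J x) :
    AntitoneOn (fun x => |A x - B x|) J := by
  refine antitoneOn_norm_of_inner_hasDerivWithinAt_nonpos hJ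
    (fun x hx => (h x hx).hasDerivWithinAt_sub) fun x hx => ?_
  obtain ⟨hA, hB, hD, -, -⟩ := h x (interior_subset hx)
  have hrate : 0 ≤ (A x + B x) ^ 2 / (A x * B x * D x) := by positivity
  calc inner ℝ (A x - B x) (-((A x + B x) ^ 2 / (A x * B x * D x)) * (A x - B x))
      = -((A x + B x) ^ 2 / (A x * B x * D x) * (A x - B x) ^ 2) := by
        simp only [RCLike.inner_apply, conj_trivial]
        ring
    _ ≤ 0 := neg_nonpos.mpr (mul_nonneg hrate (sq_nonneg _))

theorem eq_of_eq_of_le (hJ : Convex ℝ J) (h : ∀ x ∈ J, IsABRicciFlowWithinAt A B D J x)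
    (hs : s ∈ J) (ht : t ∈ J) (hst : s ≤ t) (hAB : A s = B s) : A t = B t := by
  have hle : |A t - B t| ≤ |A s - B s| := antitoneOn_abs_sub hJ h hs ht hst
  rw [sub_eq_zero.mpr hAB, abs_zero] at hle
  exact sub_eq_zero.mp (abs_nonpos_iff.mp hle)

theorem eq_initial_of_eq (hJ : Convex ℝ J) (h : ∀ x ∈ J, IsABRicciFlowWithinAt A B D J x)
    (hs : s ∈ J) (ht : t ∈ J) (hst : s ≤ t) (hAB : A s = B s) : A t = A s ∧ B t = A s := by
  have hABt : A t = B t := eq_of_eq_of_le hJ h hs ht hst hAB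
  have hmul : A t * A t = A s * A s := by
    simpa only [← hABt, ← hAB] using mul_eq_mul hJ h hs ht
  have hA : A t = A s := (mul_self_inj (h t ht).pos_A.le (h s hs).pos_A.le).mp hmul
  exact ⟨hA, hABt ▸ hA⟩

end IsABRicciFlowWithinAt

theorem stmt6_general {A B D : ℝ → ℝ} {J S : Set ℝ} {t₀ : ℝ} (hJ : Convex ℝ J) (hJS : J ⊆ S)
    (ht₀ : IsLeast J t₀) (h : ∀ t ∈ J, IsABRicciFlowWithinAt A B D S t) :
    (∀ t ∈ J, A t * B t = A t₀ * B t₀) ∧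
    (∀ t ∈ J, HasDerivWithinAt (fun s => A s - B s)
      (-((A t + B t) ^ 2 / (A t * B t * D t)) * (A t - B t)) S t) ∧
    AntitoneOn (fun t => |A t - B t|) J ∧
    (A t₀ = B t₀ → ∀ t ∈ J, A t = A t₀ ∧ B t = A t₀) :=
  have hJflow : ∀ t ∈ J, IsABRicciFlowWithinAt A B D J t := fun t ht => (h t ht).mono hJS
  ⟨fun _ ht => IsABRicciFlowWithinAt.mul_eq_mul hJ hJflow ht₀.1 ht,
    fun t ht => (h t ht).hasDerivWithinAt_sub,
    IsABRicciFlowWithinAt.antitoneOn_abs_sub hJ hJflow,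
    fun hAB _ ht => IsABRicciFlowWithinAt.eq_initial_of_eq hJ hJflow ht₀.1 ht (ht₀.2 ht) hAB⟩

/-- Ricci flow on the class U1[Z,Z̄,1]: the product `A·B` is conserved,
`(A - B)' = -((A+B)²/(ABD))·(A-B)`, `|A - B|` is nonincreasing, and if
`λ1 = λ2` then `A ≡ B ≡ λ1`. -/
theorem stmt6 (k l1 l2 l4 : ℝ)
    (hl1 : 0 < l1) (hl2 : 0 < l2) (hl4 : 0 < l4)
    (A B D : ℝ → ℝ)
    (hA0 : A 0 = l1) (hB0 : B 0 = l2) (hD0 : D 0 = l4)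
    (hApos : ∀ t ≥ (0 : ℝ), 0 < A t)
    (hBpos : ∀ t ≥ (0 : ℝ), 0 < B t)
    (hDpos : ∀ t ≥ (0 : ℝ), 0 < D t)
    (hA' : ∀ t ≥ (0 : ℝ), HasDerivAt A (-(A t ^ 2 - B t ^ 2) / (B t * D t)) t)
    (hB' : ∀ t ≥ (0 : ℝ), HasDerivAt B (-(B t ^ 2 - A t ^ 2) / (A t * D t)) t)
    (hD' : ∀ t ≥ (0 : ℝ), HasDerivAt D
      (((A t - B t) ^ 2 + 12 * k ^ 2 * A t * B t) / (A t * B t)) t) :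
    (∀ t ≥ (0 : ℝ), A t * B t = l1 * l2) ∧
    (∀ t ≥ (0 : ℝ), HasDerivAt (fun s => A s - B s)
      (-((A t + B t) ^ 2 / (A t * B t * D t)) * (A t - B t)) t) ∧
    AntitoneOn (fun t => |A t - B t|) (Set.Ici (0 : ℝ)) ∧
    (l1 = l2 → ∀ t ≥ (0 : ℝ), A t = l1 ∧ B t = l1) := by
  subst hA0 hB0
  simpa only [hasDerivWithinAt_univ, mem_Ici, ge_iff_le] using
    stmt6_general (convex_Ici 0) (subset_univ _) isLeast_Ici
      fun t ht => ⟨hApos t ht, hBpos t ht, hDpos t ht, (hA' t ht).hasDerivWithinAt,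
        (hB' t ht).hasDerivWithinAt⟩
end

section
/- Let k ∈ ℝ and λ4 > 0, λ2 ≥ λ1 > 0. Suppose A, B, D : [0,∞) → ℝ are differentiable, strictly positive, and satisfy A' = -(A² - B²)/(BD), B' = -(B² - A²)/(AD), D' = ((A - B)² + 12k²AB)/(AB), with A(0) = λ1, B(0) = λ2, D(0) = λ4. Then for all t ≥ 0: 12k² ≤ D'(t) ≤ 12k² + λ2/λ1, hence λ4 + 12k²t ≤ D(t) ≤ λ4 + (12k² + λ2/λ1)t; moreover A(t) → √(λ1λ2) and B(t) → √(λ1λ2) as t → ∞. -/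
open Filter

/-!
The product `A * B` is conserved, and `E = (A - B) ^ 2` decreases, so
`D' = 12 * k ^ 2 + E / (A * B)` is bounded and `D` grows at most linearly. On the other hand
`E' = -2 * (A + B) ^ 2 / (A * B * D) * E ≤ -(8 / D) * E`, and since `∫ 1 / D` diverges at
least logarithmically, `E` tends to zero. The geometric mean `√(A * B)` lies between `A` and `B`,
hence it is the limit of both.
-/

open Set Topology

section Calculus

variable {s : Set ℝ} {f f' : ℝ → ℝ}

theorem antitoneOn_of_hasDerivWithinAt_self_nonpos (hs : Convex ℝ s)
    (hf : ∀ x ∈ s, HasDerivWithinAt f (f' x) s x) (hf' : ∀ x ∈ s, f' x ≤ 0) : AntitoneOn f s :=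
  antitoneOn_of_hasDerivWithinAt_nonpos hs (fun x hx => (hf x hx).continuousWithinAt)
    (fun x hx => (hf x (interior_subset hx)).mono interior_subset)
    (fun x hx => hf' x (interior_subset hx))

theorem image_sub_le_mul_sub_of_hasDerivWithinAt_le {C x y : ℝ} (hs : Convex ℝ s)
    (hf : ∀ z ∈ s, HasDerivWithinAt f (f' z) s z) (hC : ∀ z ∈ s, f' z ≤ C)
    (hx : x ∈ s) (hy : y ∈ s) (hxy : x ≤ y) : f y - f x ≤ C * (y - x) := by
  have hanti : AntitoneOn (fun z => f z - C * z) s :=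
    antitoneOn_of_hasDerivWithinAt_self_nonpos hs
      (fun z hz => (hf z hz).sub ((hasDerivWithinAt_id z s).const_mul C))
      (fun z hz => by linarith [hC z hz])
  linarith [hanti hx hy hxy]

theorem mul_sub_le_image_sub_of_le_hasDerivWithinAt {C x y : ℝ} (hs : Convex ℝ s)
    (hf : ∀ z ∈ s, HasDerivWithinAt f (f' z) s z) (hC : ∀ z ∈ s, C ≤ f' z)
    (hx : x ∈ s) (hy : y ∈ s) (hxy : x ≤ y) : C * (y - x) ≤ f y - f x := by
  have hneg : -f y - -f x ≤ -C * (y - x) :=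
    image_sub_le_mul_sub_of_hasDerivWithinAt_le hs (fun z hz => (hf z hz).neg)
      (fun z hz => neg_le_neg (hC z hz)) hx hy hxy
  linarith

theorem tendsto_zero_of_hasDerivWithinAt_le_neg_mul {g g' : ℝ → ℝ} {a : ℝ}
    (hf : ∀ t ∈ Ici a, HasDerivWithinAt f (f' t) (Ici a) t)
    (hg : ∀ t ∈ Ici a, HasDerivWithinAt g (g' t) (Ici a) t)
    (hf_nonneg : ∀ t ∈ Ici a, 0 ≤ f t) (hle : ∀ t ∈ Ici a, f' t ≤ -g' t * f t)
    (hg_top : Tendsto g atTop atTop) : Tendsto f atTop (𝓝 0) := by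
  -- `exp ∘ g` is an integrating factor for the differential inequality.
  have hanti : AntitoneOn (fun t => f t * Real.exp (g t)) (Ici a) := by
    refine antitoneOn_of_hasDerivWithinAt_self_nonpos (convex_Ici a)
      (fun t ht => (hf t ht).mul (hg t ht).exp) fun t ht => ?_
    calc f' t * Real.exp (g t) + f t * (Real.exp (g t) * g' t)
        = (f' t - -g' t * f t) * Real.exp (g t) := by ring
      _ ≤ 0 := mul_nonpos_of_nonpos_of_nonneg (sub_nonpos.2 (hle t ht)) (Real.exp_nonneg _)
  refine squeeze_zero' ((eventually_ge_atTop a).mono hf_nonneg) ?_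
    ((tendsto_const_nhds (x := f a * Real.exp (g a))).div_atTop
      (Real.tendsto_exp_atTop.comp hg_top))
  filter_upwards [eventually_ge_atTop a] with t ht
  exact (le_div_iff₀ (Real.exp_pos _)).2 (hanti self_mem_Ici ht ht)

end Calculus

theorem sqrt_mul_mem_uIcc {a b : ℝ} (ha : 0 ≤ a) (hb : 0 ≤ b) : √(a * b) ∈ uIcc a b := by
  wlog hab : a ≤ b generalizing a b
  · rw [mul_comm, uIcc_comm]
    exact this hb ha (le_of_not_ge hab)
  · rw [uIcc_of_le hab]
    exact ⟨Real.le_sqrt_of_sq_le (by nlinarith), Real.sqrt_le_iff.2 ⟨hb, by nlinarith⟩⟩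

theorem sub_sq_div_mul_le_div {a b : ℝ} (ha : 0 < a) (hab : a ≤ b) :
    (a - b) ^ 2 / (a * b) ≤ b / a := by
  have hb : 0 < b := ha.trans_le hab
  calc (a - b) ^ 2 / (a * b) ≤ b ^ 2 / (a * b) := by
        gcongr ?_ / _
        nlinarith
    _ = b / a := by field_simp

/-- The Ricci flow equations on `[0, ∞)` for the components `A`, `B`, `D` of a positive diagonal
left-invariant metric on the Lie group of class `U1[Z,Z̄,1]` with parameter `k`. Derivatives are
taken within `[0, ∞)`, hence one-sided at `0`. -/
structure IsRicciFlowU1 (k : ℝ) (A B D : ℝ → ℝ) : Prop where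
  A_pos : ∀ t ≥ (0 : ℝ), 0 < A t
  B_pos : ∀ t ≥ (0 : ℝ), 0 < B t
  D_pos : ∀ t ≥ (0 : ℝ), 0 < D t
  hasDerivWithinAt_A : ∀ t ≥ (0 : ℝ),
    HasDerivWithinAt A (-(A t ^ 2 - B t ^ 2) / (B t * D t)) (Ici 0) t
  hasDerivWithinAt_B : ∀ t ≥ (0 : ℝ),
    HasDerivWithinAt B (-(B t ^ 2 - A t ^ 2) / (A t * D t)) (Ici 0) t
  hasDerivWithinAt_D : ∀ t ≥ (0 : ℝ),
    HasDerivWithinAt D (((A t - B t) ^ 2 + 12 * k ^ 2 * A t * B t) / (A t * B t)) (Ici 0) t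

namespace IsRicciFlowU1

variable {k : ℝ} {A B D : ℝ → ℝ} {t : ℝ}

theorem swap (h : IsRicciFlowU1 k A B D) : IsRicciFlowU1 k B A D where
  A_pos := h.B_pos
  B_pos := h.A_pos
  D_pos := h.D_pos
  hasDerivWithinAt_A := h.hasDerivWithinAt_B
  hasDerivWithinAt_B := h.hasDerivWithinAt_A
  hasDerivWithinAt_D t ht := (h.hasDerivWithinAt_D t ht).congr_deriv (by ring)

theorem mul_eq (h : IsRicciFlowU1 k A B D) (ht : 0 ≤ t) : A t * B t = A 0 * B 0 := by
  have hderiv : ∀ x ∈ Ici (0 : ℝ), HasDerivWithinAt (fun x => A x * B x) 0 (Ici 0) x := by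
    intro x hx
    have := h.A_pos x hx
    have := h.B_pos x hx
    have := h.D_pos x hx
    refine ((h.hasDerivWithinAt_A x hx).mul (h.hasDerivWithinAt_B x hx)).congr_deriv ?_
    field_simp
    ring
  have hnorm := (convex_Ici (0 : ℝ)).norm_image_sub_le_of_norm_hasDerivWithin_le hderiv
    (fun _ _ => norm_zero.le) self_mem_Ici ht
  rwa [zero_mul, norm_le_zero_iff, sub_eq_zero] at hnorm

theorem hasDerivWithinAt_sub_sq (h : IsRicciFlowU1 k A B D) (ht : 0 ≤ t) :
    HasDerivWithinAt (fun t => (A t - B t) ^ 2)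
      (-(2 * (A t + B t) ^ 2 / (A t * B t * D t)) * (A t - B t) ^ 2) (Ici 0) t := by
  have := h.A_pos t ht
  have := h.B_pos t ht
  have := h.D_pos t ht
  refine (((h.hasDerivWithinAt_A t ht).sub (h.hasDerivWithinAt_B t ht)).pow 2).congr_deriv ?_
  simp only [Pi.sub_apply]
  field_simp
  ring

theorem eight_div_le (h : IsRicciFlowU1 k A B D) (ht : 0 ≤ t) :
    8 / D t ≤ 2 * (A t + B t) ^ 2 / (A t * B t * D t) := by
  have hA := h.A_pos t ht
  have hB := h.B_pos t ht
  have hD := h.D_pos t ht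
  calc 8 / D t = 2 * (4 * A t * B t) / (A t * B t * D t) := by field_simp; norm_num
    _ ≤ 2 * (A t + B t) ^ 2 / (A t * B t * D t) := by
        gcongr
        exact four_mul_le_sq_add (A t) (B t)

theorem sub_sq_le (h : IsRicciFlowU1 k A B D) (ht : 0 ≤ t) :
    (A t - B t) ^ 2 ≤ (A 0 - B 0) ^ 2 := by
  refine antitoneOn_of_hasDerivWithinAt_self_nonpos (convex_Ici 0)
    (fun x hx => h.hasDerivWithinAt_sub_sq hx) (fun x hx => ?_) self_mem_Ici ht ht
  have := h.A_pos x hx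
  have := h.B_pos x hx
  have := h.D_pos x hx
  rw [neg_mul]
  exact neg_nonpos.2 (by positivity)

theorem derivWithin_D (h : IsRicciFlowU1 k A B D) (ht : 0 ≤ t) :
    derivWithin D (Ici 0) t = 12 * k ^ 2 + (A t - B t) ^ 2 / (A 0 * B 0) := by
  have := h.A_pos t ht
  have := h.B_pos t ht
  rw [(h.hasDerivWithinAt_D t ht).derivWithin (uniqueDiffOn_Ici 0 t ht), ← h.mul_eq ht]
  field_simp
  ring

theorem A_zero_mul_B_zero_pos (h : IsRicciFlowU1 k A B D) : 0 < A 0 * B 0 :=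
  mul_pos (h.A_pos 0 le_rfl) (h.B_pos 0 le_rfl)

theorem le_derivWithin_D (h : IsRicciFlowU1 k A B D) (ht : 0 ≤ t) :
    12 * k ^ 2 ≤ derivWithin D (Ici 0) t := by
  have := h.A_zero_mul_B_zero_pos
  rw [h.derivWithin_D ht]
  exact le_add_of_nonneg_right (by positivity)

theorem derivWithin_D_le (h : IsRicciFlowU1 k A B D) (ht : 0 ≤ t) :
    derivWithin D (Ici 0) t ≤ 12 * k ^ 2 + (A 0 - B 0) ^ 2 / (A 0 * B 0) := by
  have := h.A_zero_mul_B_zero_pos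
  rw [h.derivWithin_D ht]
  gcongr _ + ?_ / _
  exact h.sub_sq_le ht

theorem hasDerivWithinAt_derivWithin_D (h : IsRicciFlowU1 k A B D) (ht : 0 ≤ t) :
    HasDerivWithinAt D (derivWithin D (Ici 0) t) (Ici 0) t :=
  (h.hasDerivWithinAt_D t ht).differentiableWithinAt.hasDerivWithinAt

theorem le_D (h : IsRicciFlowU1 k A B D) (ht : 0 ≤ t) : D 0 + 12 * k ^ 2 * t ≤ D t := by
  have := mul_sub_le_image_sub_of_le_hasDerivWithinAt (convex_Ici 0)
    (fun x hx => h.hasDerivWithinAt_derivWithin_D hx) (fun x hx => h.le_derivWithin_D hx)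
    self_mem_Ici ht ht
  linarith

theorem D_le (h : IsRicciFlowU1 k A B D) (ht : 0 ≤ t) :
    D t ≤ D 0 + (12 * k ^ 2 + (A 0 - B 0) ^ 2 / (A 0 * B 0)) * t := by
  have := image_sub_le_mul_sub_of_hasDerivWithinAt_le (convex_Ici 0)
    (fun x hx => h.hasDerivWithinAt_derivWithin_D hx) (fun x hx => h.derivWithin_D_le hx)
    self_mem_Ici ht ht
  linarith

theorem exists_D_le_mul_one_add (h : IsRicciFlowU1 k A B D) :
    ∃ c > 0, ∀ t ≥ (0 : ℝ), D t ≤ c * (1 + t) := by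
  have hD := h.D_pos 0 le_rfl
  have hAB := h.A_zero_mul_B_zero_pos
  set M := 12 * k ^ 2 + (A 0 - B 0) ^ 2 / (A 0 * B 0)
  have hM : 0 ≤ M := by positivity
  refine ⟨D 0 + M, by positivity, fun t ht => ?_⟩
  calc D t ≤ D 0 + M * t := h.D_le ht
    _ ≤ (D 0 + M) * (1 + t) := by linarith [mul_nonneg hD.le ht]

theorem tendsto_sub_sq (h : IsRicciFlowU1 k A B D) :
    Tendsto (fun t => (A t - B t) ^ 2) atTop (𝓝 0) := by
  obtain ⟨c, hc, hDc⟩ := h.exists_D_le_mul_one_add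
  have hlog_deriv : ∀ t ∈ Ici (0 : ℝ),
      HasDerivWithinAt (fun t => 8 / c * Real.log (1 + t)) (8 / c * (1 / (1 + t))) (Ici 0) t :=
    fun t ht => (((hasDerivWithinAt_id t _).const_add 1).log
      (add_pos_of_pos_of_nonneg one_pos ht).ne').const_mul (8 / c)
  have hlog_top : Tendsto (fun t => 8 / c * Real.log (1 + t)) atTop atTop :=
    (Real.tendsto_log_atTop.comp (tendsto_atTop_add_const_left _ 1 tendsto_id)).const_mul_atTop
      (by positivity)
  refine tendsto_zero_of_hasDerivWithinAt_le_neg_mul (fun t ht => h.hasDerivWithinAt_sub_sq ht)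
    hlog_deriv (fun t _ => sq_nonneg _) (fun t ht => ?_) hlog_top
  have hrate : 8 / c * (1 / (1 + t)) ≤ 2 * (A t + B t) ^ 2 / (A t * B t * D t) :=
    calc 8 / c * (1 / (1 + t)) = 8 / (c * (1 + t)) := by rw [div_mul_div_comm, mul_one]
      _ ≤ 8 / D t := div_le_div_of_nonneg_left (by norm_num) (h.D_pos t ht) (hDc t ht)
      _ ≤ 2 * (A t + B t) ^ 2 / (A t * B t * D t) := h.eight_div_le ht
  exact mul_le_mul_of_nonneg_right (neg_le_neg hrate) (sq_nonneg _)

theorem tendsto_A (h : IsRicciFlowU1 k A B D) : Tendsto A atTop (𝓝 √(A 0 * B 0)) := by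
  have hsub : Tendsto (fun t => |B t - A t|) atTop (𝓝 0) := by
    simpa only [Real.sqrt_sq_eq_abs, Real.sqrt_zero] using h.swap.tendsto_sub_sq.sqrt
  rw [tendsto_iff_dist_tendsto_zero]
  refine squeeze_zero' (Eventually.of_forall fun t => dist_nonneg) ?_ hsub
  filter_upwards [eventually_ge_atTop 0] with t ht
  rw [dist_comm, Real.dist_eq, ← h.mul_eq ht]
  exact abs_sub_left_of_mem_uIcc (sqrt_mul_mem_uIcc (h.A_pos t ht).le (h.B_pos t ht).le)

theorem tendsto_B (h : IsRicciFlowU1 k A B D) : Tendsto B atTop (𝓝 √(A 0 * B 0)) :=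
  mul_comm (B 0) (A 0) ▸ h.swap.tendsto_A

end IsRicciFlowU1

theorem stmt7_general {k : ℝ} {A B D : ℝ → ℝ} (h : IsRicciFlowU1 k A B D) :
    (∀ t ≥ (0 : ℝ), 12 * k ^ 2 ≤ derivWithin D (Ici 0) t ∧
      derivWithin D (Ici 0) t ≤ 12 * k ^ 2 + (A 0 - B 0) ^ 2 / (A 0 * B 0)) ∧
    (∀ t ≥ (0 : ℝ), D 0 + 12 * k ^ 2 * t ≤ D t ∧
      D t ≤ D 0 + (12 * k ^ 2 + (A 0 - B 0) ^ 2 / (A 0 * B 0)) * t) ∧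
    Tendsto A atTop (𝓝 √(A 0 * B 0)) ∧ Tendsto B atTop (𝓝 √(A 0 * B 0)) :=
  ⟨fun _ ht => ⟨h.le_derivWithin_D ht, h.derivWithin_D_le ht⟩,
    fun _ ht => ⟨h.le_D ht, h.D_le ht⟩, h.tendsto_A, h.tendsto_B⟩

/-- Ricci flow on the class U1[Z,Z̄,1]: bounds on `D'` and `D`, and
convergence of `A` and `B` to `√(λ1 λ2)`. -/
theorem stmt7 (k l1 l2 l4 : ℝ)
    (hl1 : 0 < l1) (hl2 : 0 < l2) (hl4 : 0 < l4) (hle : l1 ≤ l2)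
    (A B D : ℝ → ℝ)
    (hA0 : A 0 = l1) (hB0 : B 0 = l2) (hD0 : D 0 = l4)
    (hApos : ∀ t ≥ (0 : ℝ), 0 < A t)
    (hBpos : ∀ t ≥ (0 : ℝ), 0 < B t)
    (hDpos : ∀ t ≥ (0 : ℝ), 0 < D t)
    (hA' : ∀ t ≥ (0 : ℝ), HasDerivAt A (-(A t ^ 2 - B t ^ 2) / (B t * D t)) t)
    (hB' : ∀ t ≥ (0 : ℝ), HasDerivAt B (-(B t ^ 2 - A t ^ 2) / (A t * D t)) t)
    (hD' : ∀ t ≥ (0 : ℝ), HasDerivAt D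
      (((A t - B t) ^ 2 + 12 * k ^ 2 * A t * B t) / (A t * B t)) t) :
    (∀ t ≥ (0 : ℝ), 12 * k ^ 2 ≤ deriv D t ∧ deriv D t ≤ 12 * k ^ 2 + l2 / l1) ∧
    (∀ t ≥ (0 : ℝ), l4 + 12 * k ^ 2 * t ≤ D t ∧ D t ≤ l4 + (12 * k ^ 2 + l2 / l1) * t) ∧
    Tendsto A atTop (nhds (Real.sqrt (l1 * l2))) ∧
    Tendsto B atTop (nhds (Real.sqrt (l1 * l2))) := by
  subst hA0 hB0 hD0
  obtain ⟨hderiv, hD, hlim⟩ := stmt7_general (k := k) (A := A) (B := B) (D := D)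
    ⟨hApos, hBpos, hDpos, fun t ht => (hA' t ht).hasDerivWithinAt,
      fun t ht => (hB' t ht).hasDerivWithinAt, fun t ht => (hD' t ht).hasDerivWithinAt⟩
  have hratio := sub_sq_div_mul_le_div hl1 hle
  refine ⟨fun t ht => ?_, fun t ht => ⟨(hD t ht).1, (hD t ht).2.trans (by gcongr)⟩, hlim⟩
  rw [← (hD' t ht).differentiableAt.derivWithin (uniqueDiffOn_Ici 0 t ht)]
  exact ⟨(hderiv t ht).1, (hderiv t ht).2.trans (by gcongr)⟩
end

section
/- Let λ1, λ2, λ3, λ4 > 0 and define, for t ≥ 0: A(t) = (λ1³ + (3λ1²λ2/λ4)t)^{1/3}, B(t) = λ1λ2 / A(t), C(t) = λ3, D(t) = (λ4/λ1)A(t). Then A, B, C, D are strictly positive, satisfy A(0) = λ1, B(0) = λ2, C(0) = λ3, D(0) = λ4, and solve the system A' = B/D, B' = -B²/(AD), C' = 0, D' = B/A on [0,∞). Moreover A(t)B(t) = λ1λ2 and A(t)/D(t) = λ1/λ4 for all t ≥ 0, and as t → ∞, A(t) → ∞, B(t) → 0⁺, and D(t) → ∞. -/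
open Filter

/-!
The quantities `A B` and `A / D` are conserved by the flow, so with `p = λ1 λ2` and
`r = λ4 / λ1` the system collapses to the single equation `A' = p / (r A²)`. Equivalently
`(A³)' = 3 p / r` is constant, and `A` is the cube root of an affine function of time. The
solution lives as long as that function stays positive, that is, for `t > -λ1 λ4 / (3 λ2)`.
-/

/-- The Ricci flow system at time `t` for the diagonal left-invariant metric
`A θ1² + B θ2² + C θ3² + D θ4²` on Nil³ × ℝ, with bracket `[X1, X4] = X2`. Each equation is a
two-sided derivative at the single time `t`. -/
def IsNilRicciFlowAt (A B C D : ℝ → ℝ) (t : ℝ) : Prop :=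
  HasDerivAt A (B t / D t) t ∧
  HasDerivAt B (-(B t ^ 2) / (A t * D t)) t ∧
  HasDerivAt C 0 t ∧
  HasDerivAt D (B t / A t) t

/-- The component `A` of the explicit Ricci flow on Nil³ × ℝ with initial metric
`(l1, l2, l3, l4)`; it determines the other components through the conserved quantities. -/
noncomputable def nilScale (l1 l2 l4 t : ℝ) : ℝ :=
  (l1 ^ 3 + (3 * l1 ^ 2 * l2 / l4) * t) ^ ((1 : ℝ) / 3)

theorem hasDerivAt_rpow_one_div_natCast {u : ℝ → ℝ} {u' t : ℝ} {n : ℕ} (hn : n ≠ 0)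
    (hu : HasDerivAt u u' t) (hpos : 0 < u t) :
    HasDerivAt (fun s => u s ^ ((1 : ℝ) / n))
      (u' / (n * (u t ^ ((1 : ℝ) / n)) ^ (n - 1))) t := by
  have hn' : (n : ℝ) ≠ 0 := Nat.cast_ne_zero.mpr hn
  have hpow : u t ^ ((1 : ℝ) / n - 1) = ((u t ^ ((1 : ℝ) / n)) ^ (n - 1))⁻¹ := by
    rw [← Real.rpow_mul_natCast hpos.le, ← Real.rpow_neg hpos.le,
      Nat.cast_pred (Nat.pos_of_ne_zero hn)]
    congr 1
    field_simp
    ring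
  refine (hu.rpow_const (Or.inl hpos.ne')).congr_deriv ?_
  rw [hpow]
  field_simp

theorem tendsto_const_add_mul_rpow_atTop (a : ℝ) {k p : ℝ} (hk : 0 < k) (hp : 0 < p) :
    Tendsto (fun t : ℝ => (a + k * t) ^ p) atTop atTop :=
  (tendsto_rpow_atTop hp).comp
    (tendsto_atTop_add_const_left _ _ (tendsto_id.const_mul_atTop hk))

theorem isNilRicciFlowAt_of_hasDerivAt {A : ℝ → ℝ} {p q r t : ℝ} (hr : r ≠ 0) (hAt : A t ≠ 0)
    (hA : HasDerivAt A (p / (r * A t ^ 2)) t) :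
    IsNilRicciFlowAt A (fun s => p / A s) (fun _ => q) (fun s => r * A s) t :=
  ⟨hA.congr_deriv (by field_simp),
    ((hasDerivAt_const t p).fun_div hA hAt).congr_deriv (by field_simp; ring),
    hasDerivAt_const t q,
    (hA.const_mul r).congr_deriv (by field_simp)⟩

section NilScale

variable {l1 l2 l4 t : ℝ}

theorem nilScale_zero (hl1 : 0 ≤ l1) : nilScale l1 l2 l4 0 = l1 := by
  simpa [nilScale] using Real.pow_rpow_inv_natCast hl1 three_ne_zero

theorem nilScale_base_pos (hl1 : 0 < l1) (hl2 : 0 < l2) (hl4 : 0 < l4)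
    (ht : -(l1 * l4 / (3 * l2)) < t) : 0 < l1 ^ 3 + (3 * l1 ^ 2 * l2 / l4) * t := by
  have hfactor : l1 ^ 3 + (3 * l1 ^ 2 * l2 / l4) * t
      = (3 * l1 ^ 2 * l2 / l4) * (t - -(l1 * l4 / (3 * l2))) := by
    field_simp
    ring
  rw [hfactor]
  exact mul_pos (by positivity) (sub_pos.mpr ht)

theorem nilScale_pos (hl1 : 0 < l1) (hl2 : 0 < l2) (hl4 : 0 < l4)
    (ht : -(l1 * l4 / (3 * l2)) < t) : 0 < nilScale l1 l2 l4 t :=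
  Real.rpow_pos_of_pos (nilScale_base_pos hl1 hl2 hl4 ht) _

theorem hasDerivAt_nilScale (ht : 0 < l1 ^ 3 + (3 * l1 ^ 2 * l2 / l4) * t) :
    HasDerivAt (nilScale l1 l2 l4) (l1 * l2 / (l4 / l1 * nilScale l1 l2 l4 t ^ 2)) t := by
  have hbase : HasDerivAt (fun s : ℝ => l1 ^ 3 + (3 * l1 ^ 2 * l2 / l4) * s)
      (3 * l1 ^ 2 * l2 / l4) t := by
    simpa only [id_eq, mul_one] using
      ((hasDerivAt_id t).const_mul (3 * l1 ^ 2 * l2 / l4)).const_add (l1 ^ 3)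
  refine (hasDerivAt_rpow_one_div_natCast three_ne_zero hbase ht).congr_deriv ?_
  simp only [nilScale, Nat.cast_ofNat, Nat.add_one_sub_one]
  field_simp

theorem tendsto_nilScale_atTop (hl1 : 0 < l1) (hl2 : 0 < l2) (hl4 : 0 < l4) :
    Tendsto (nilScale l1 l2 l4) atTop atTop :=
  tendsto_const_add_mul_rpow_atTop _ (by positivity) (by norm_num)

end NilScale

theorem stmt8_general (l1 l2 l3 l4 : ℝ)
    (hl1 : 0 < l1) (hl2 : 0 < l2) (hl3 : 0 < l3) (hl4 : 0 < l4)
    (A B C D : ℝ → ℝ)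
    (hA : ∀ t, A t = (l1 ^ 3 + (3 * l1 ^ 2 * l2 / l4) * t) ^ ((1 : ℝ) / 3))
    (hB : ∀ t, B t = l1 * l2 / A t)
    (hC : ∀ t, C t = l3)
    (hD : ∀ t, D t = (l4 / l1) * A t) :
    (∀ t > -(l1 * l4 / (3 * l2)), 0 < A t ∧ 0 < B t ∧ 0 < C t ∧ 0 < D t) ∧
    (A 0 = l1 ∧ B 0 = l2 ∧ C 0 = l3 ∧ D 0 = l4) ∧
    (∀ t > -(l1 * l4 / (3 * l2)), IsNilRicciFlowAt A B C D t) ∧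
    (∀ t > -(l1 * l4 / (3 * l2)), A t * B t = l1 * l2 ∧ A t / D t = l1 / l4) ∧
    Tendsto A atTop atTop ∧
    Tendsto B atTop (nhds 0) ∧
    Tendsto D atTop atTop := by
  obtain rfl : A = nilScale l1 l2 l4 := funext hA
  obtain rfl : B = fun t => l1 * l2 / nilScale l1 l2 l4 t := funext hB
  obtain rfl : C = fun _ => l3 := funext hC
  obtain rfl : D = fun t => l4 / l1 * nilScale l1 l2 l4 t := funext hD
  have hpos : ∀ t > -(l1 * l4 / (3 * l2)), 0 < nilScale l1 l2 l4 t :=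
    fun _ ht => nilScale_pos hl1 hl2 hl4 ht
  have hlim := tendsto_nilScale_atTop hl1 hl2 hl4
  have hratio : 0 < l4 / l1 := div_pos hl4 hl1
  refine ⟨fun t ht => ?_, ?_, fun t ht => ?_, fun t ht => ?_,
    hlim, hlim.const_div_atTop _, hlim.const_mul_atTop hratio⟩
  · have := hpos t ht
    exact ⟨this, by positivity, hl3, by positivity⟩
  · simp only [nilScale_zero hl1.le, true_and]
    exact ⟨mul_div_cancel_left₀ l2 hl1.ne', div_mul_cancel₀ l4 hl1.ne'⟩
  · exact isNilRicciFlowAt_of_hasDerivAt hratio.ne' (hpos t ht).ne'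
      (hasDerivAt_nilScale (nilScale_base_pos hl1 hl2 hl4 ht))
  · have := (hpos t ht).ne'
    constructor <;> field_simp

/-- Explicit Ricci flow solution on Nil³ × ℝ (class U1[2,1] with μ = 0). -/
theorem stmt8 (l1 l2 l3 l4 : ℝ)
    (hl1 : 0 < l1) (hl2 : 0 < l2) (hl3 : 0 < l3) (hl4 : 0 < l4)
    (A B C D : ℝ → ℝ)
    (hA : ∀ t, A t = (l1 ^ 3 + (3 * l1 ^ 2 * l2 / l4) * t) ^ ((1 : ℝ) / 3))
    (hB : ∀ t, B t = l1 * l2 / A t)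
    (hC : ∀ t, C t = l3)
    (hD : ∀ t, D t = (l4 / l1) * A t) :
    (∀ t ≥ (0 : ℝ), 0 < A t ∧ 0 < B t ∧ 0 < C t ∧ 0 < D t) ∧
    (A 0 = l1 ∧ B 0 = l2 ∧ C 0 = l3 ∧ D 0 = l4) ∧
    (∀ t ≥ (0 : ℝ),
      HasDerivAt A (B t / D t) t ∧
      HasDerivAt B (-(B t ^ 2) / (A t * D t)) t ∧
      HasDerivAt C 0 t ∧
      HasDerivAt D (B t / A t) t) ∧
    (∀ t ≥ (0 : ℝ), A t * B t = l1 * l2 ∧ A t / D t = l1 / l4) ∧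
    Tendsto A atTop atTop ∧
    Tendsto B atTop (nhds 0) ∧
    Tendsto D atTop atTop := by
  obtain ⟨hpos, hinit, hflow, hcons, hlim⟩ :=
    stmt8_general l1 l2 l3 l4 hl1 hl2 hl3 hl4 A B C D hA hB hC hD
  have hT : -(l1 * l4 / (3 * l2)) < 0 := neg_neg_of_pos (by positivity)
  exact ⟨fun t ht => hpos t (hT.trans_le ht), hinit, fun t ht => hflow t (hT.trans_le ht),
    fun t ht => hcons t (hT.trans_le ht), hlim⟩
end

section
/- Let λ1, λ2, λ3, λ4 > 0. Suppose A, B, C, D : [0,∞) → ℝ are differentiable, strictly positive, and satisfy A' = B/D, B' = -B²/(AD), C' = 0, D' = 3 + B/A, with A(0) = λ1, B(0) = λ2, C(0) = λ3, D(0) = λ4.111Then for all t ≥ 0: A(t)B(t) = λ1λ2; the ratio A/B is nondecreasing (indeed (A/B)' = 2/D > 0); and 3t + λ4 ≤ D(t) ≤ (3 + λ2/λ1)t + λ4. -/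
/-!
The product `A B` is conserved because `B' / B = -A' / A`, and the same relation gives
`(A / B)' = 2 A' / B = 2 / D > 0`. Hence `D' = 3 + B / A` is decreasing and greater than `3`, and by
the mean value theorem `(D t - D 0) / t` lies between `3` and the initial value of `D'`.
-/

open Set

/-- The reduced Ricci flow on a set `s` of times, for the metric components `A`, `B`, `D`.
The component `C` is constant and does not enter the other equations. The Ricci flow of the class
`U1[2,1]` with `μ = 1` has `k = 3`. -/
structure IsReducedRicciFlowOn (k : ℝ) (A B D : ℝ → ℝ) (s : Set ℝ) : Prop where
  pos_A : ∀ t ∈ s, 0 < A t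
  pos_B : ∀ t ∈ s, 0 < B t
  pos_D : ∀ t ∈ s, 0 < D t
  hasDerivAt_A : ∀ t ∈ s, HasDerivAt A (B t / D t) t
  hasDerivAt_B : ∀ t ∈ s, HasDerivAt B (-(B t ^ 2) / (A t * D t)) t
  hasDerivAt_D : ∀ t ∈ s, HasDerivAt D (k + B t / A t) t

namespace IsReducedRicciFlowOn

variable {k t t₀ : ℝ} {A B D : ℝ → ℝ} {s : Set ℝ}

theorem hasDerivAt_mul (h : IsReducedRicciFlowOn k A B D s) (ht : t ∈ s) :
    HasDerivAt (fun u => A u * B u) 0 t := by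
  have hA := (h.pos_A t ht).ne'
  have hD := (h.pos_D t ht).ne'
  refine ((h.hasDerivAt_A t ht).mul (h.hasDerivAt_B t ht)).congr_deriv ?_
  field_simp
  ring

theorem hasDerivAt_div (h : IsReducedRicciFlowOn k A B D s) (ht : t ∈ s) :
    HasDerivAt (fun u => A u / B u) (2 / D t) t := by
  have hA := (h.pos_A t ht).ne'
  have hB := (h.pos_B t ht).ne'
  have hD := (h.pos_D t ht).ne'
  refine ((h.hasDerivAt_A t ht).div (h.hasDerivAt_B t ht) hB).congr_deriv ?_
  field_simp
  ring

theorem mul_eq_mul (h : IsReducedRicciFlowOn k A B D s) (hs : Convex ℝ s) (ht₀ : t₀ ∈ s)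
    (ht : t ∈ s) : A t * B t = A t₀ * B t₀ := by
  have hle := hs.norm_image_sub_le_of_norm_hasDerivWithin_le
    (fun u hu => (h.hasDerivAt_mul hu).hasDerivWithinAt) (fun _ _ => norm_zero.le) ht₀ ht
  rwa [zero_mul, norm_le_zero_iff, sub_eq_zero] at hle

theorem monotoneOn_div (h : IsReducedRicciFlowOn k A B D s) (hs : Convex ℝ s) :
    MonotoneOn (fun u => A u / B u) s :=
  monotoneOn_of_hasDerivWithinAt_nonneg hs
    (fun _ hu => (h.hasDerivAt_div hu).continuousAt.continuousWithinAt)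
    (fun _ hu => (h.hasDerivAt_div (interior_subset hu)).hasDerivWithinAt)
    (fun u hu => (div_pos two_pos (h.pos_D u (interior_subset hu))).le)

theorem antitoneOn_div (h : IsReducedRicciFlowOn k A B D s) (hs : Convex ℝ s) :
    AntitoneOn (fun u => B u / A u) s := by
  intro u hu v hv huv
  simpa only [inv_div] using
    inv_anti₀ (div_pos (h.pos_A u hu) (h.pos_B u hu)) (h.monotoneOn_div hs hu hv huv)

theorem exists_sub_eq_mul_sub (h : IsReducedRicciFlowOn k A B D s) (hs : Convex ℝ s)
    (ht₀ : t₀ ∈ s) (ht : t ∈ s) (hlt : t₀ < t) :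
    ∃ c ∈ s, t₀ < c ∧ D t - D t₀ = (k + B c / A c) * (t - t₀) := by
  have hsub : Icc t₀ t ⊆ s := hs.ordConnected.out ht₀ ht
  obtain ⟨c, hc, hslope⟩ := exists_hasDerivAt_eq_slope D (fun u => k + B u / A u) hlt
    (fun u hu => (h.hasDerivAt_D u (hsub hu)).continuousAt.continuousWithinAt)
    (fun u hu => h.hasDerivAt_D u (hsub (Ioo_subset_Icc_self hu)))
  exact ⟨c, hsub (Ioo_subset_Icc_self hc), hc.1,
    ((eq_div_iff (sub_pos.2 hlt).ne').1 hslope).symm⟩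

theorem mul_sub_add_le_and_le (h : IsReducedRicciFlowOn k A B D s) (hs : Convex ℝ s)
    (ht₀ : t₀ ∈ s) (ht : t ∈ s) (hle : t₀ ≤ t) :
    k * (t - t₀) + D t₀ ≤ D t ∧ D t ≤ (k + B t₀ / A t₀) * (t - t₀) + D t₀ := by
  rcases hle.eq_or_lt with rfl | hlt
  · simp
  obtain ⟨c, hc, htc, hD⟩ := h.exists_sub_eq_mul_sub hs ht₀ ht hlt
  have hpos : 0 ≤ B c / A c := (div_pos (h.pos_B c hc) (h.pos_A c hc)).le
  have hanti : B c / A c ≤ B t₀ / A t₀ := h.antitoneOn_div hs ht₀ hc htc.le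
  have hnonneg : 0 ≤ t - t₀ := sub_nonneg.2 hle
  rw [← le_sub_iff_add_le, ← sub_le_iff_le_add, hD]
  exact ⟨mul_le_mul_of_nonneg_right (le_add_of_nonneg_right hpos) hnonneg,
    mul_le_mul_of_nonneg_right (by gcongr) hnonneg⟩

end IsReducedRicciFlowOn

theorem stmt9_general {k t₀ : ℝ} {A B D : ℝ → ℝ} {s : Set ℝ}
    (h : IsReducedRicciFlowOn k A B D s) (hs : Convex ℝ s) (ht₀ : t₀ ∈ s) :
    (∀ t ∈ s, A t * B t = A t₀ * B t₀) ∧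
    (∀ t ∈ s, HasDerivAt (fun u => A u / B u) (2 / D t) t ∧ 0 < 2 / D t) ∧
    MonotoneOn (fun u => A u / B u) s ∧
    (∀ t ∈ s, t₀ ≤ t →
      k * (t - t₀) + D t₀ ≤ D t ∧ D t ≤ (k + B t₀ / A t₀) * (t - t₀) + D t₀) :=
  ⟨fun _ ht => h.mul_eq_mul hs ht₀ ht,
    fun t ht => ⟨h.hasDerivAt_div ht, div_pos two_pos (h.pos_D t ht)⟩,
    h.monotoneOn_div hs,
    fun _ ht => h.mul_sub_add_le_and_le hs ht₀ ht⟩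

/-- Ricci flow on the class U1[2,1] with μ = 1 (family of Proposition 4):
`A·B` is conserved, `A/B` is nondecreasing with `(A/B)' = 2/D > 0`, and
`3t + λ4 ≤ D(t) ≤ (3 + λ2/λ1) t + λ4`. -/
theorem stmt9 (l1 l2 l3 l4 : ℝ)
    (hl1 : 0 < l1) (hl2 : 0 < l2) (hl3 : 0 < l3) (hl4 : 0 < l4)
    (A B C D : ℝ → ℝ)
    (hA0 : A 0 = l1) (hB0 : B 0 = l2) (hC0 : C 0 = l3) (hD0 : D 0 = l4)
    (hApos : ∀ t ≥ (0 : ℝ), 0 < A t)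
    (hBpos : ∀ t ≥ (0 : ℝ), 0 < B t)
    (hCpos : ∀ t ≥ (0 : ℝ), 0 < C t)
    (hDpos : ∀ t ≥ (0 : ℝ), 0 < D t)
    (hA' : ∀ t ≥ (0 : ℝ), HasDerivAt A (B t / D t) t)
    (hB' : ∀ t ≥ (0 : ℝ), HasDerivAt B (-(B t ^ 2) / (A t * D t)) t)
    (hC' : ∀ t ≥ (0 : ℝ), HasDerivAt C 0 t)
    (hD' : ∀ t ≥ (0 : ℝ), HasDerivAt D (3 + B t / A t) t) :
    (∀ t ≥ (0 : ℝ), A t * B t = l1 * l2) ∧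
    (∀ t ≥ (0 : ℝ), HasDerivAt (fun s => A s / B s) (2 / D t) t ∧ 0 < 2 / D t) ∧
    MonotoneOn (fun t => A t / B t) (Set.Ici (0 : ℝ)) ∧
    (∀ t ≥ (0 : ℝ), 3 * t + l4 ≤ D t ∧ D t ≤ (3 + l2 / l1) * t + l4) := by
  have h : IsReducedRicciFlowOn 3 A B D (Ici 0) := ⟨hApos, hBpos, hDpos, hA', hB', hD'⟩
  obtain ⟨hmul, hdiv, hmono, hD⟩ := stmt9_general h (convex_Ici 0) self_mem_Ici
  simp only [hA0, hB0, hD0, sub_zero] at hmul hD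
  exact ⟨hmul, hdiv, hmono, fun t ht => hD t ht ht⟩
end

section
/- Let λ1, λ2, λ3, λ4 > 0 and set E0 = λ2/(λ1λ4), F0 = λ3/(λ2λ4). Define, for t ≥ 0: A(t) = λ1(3E0t + 1)^{1/3}, B(t) = λ2(3E0t + 1)^{-1/3}(3F0t + 1)^{1/3}, C(t) = λ3(3F0t + 1)^{-1/3}, D(t) = λ4(3E0t + 1)^{1/3}(3F0t + 1)^{1/3}. Then A, B, C, D are strictly positive, take the values λ1, λ2, λ3, λ4 at t = 0, and solve the system A' = B/D, B' = (AC - B²)/(AD), C' = -C²/(BD), D' = B/A + C/B on [0,∞). Moreover A(t)B(t)C(t) = λ1λ2λ3 and A(t)/(C(t)D(t)) = λ1/(λ3λ4) for all t ≥ 0, the functions E = B/(AD) and F = C/(BD) satisfy E' = -3E² and F' = -3F², and as t → ∞ one has A(t) → ∞, B(t) → (λ1λ2λ3)^{1/3}, C(t) → 0⁺, D(t) → ∞. -/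
open Filter

/-!
Put `E = B / (A D)` and `F = C / (B D)`. The Ricci flow system says exactly that `A`, `B`, `C`, `D`
have logarithmic derivatives `E`, `F - E`, `-F`, `E + F`. Hence `A B C` and `A / (C D)` have
logarithmic derivative `0`, while `E` and `F` have logarithmic derivatives `-3 E` and `-3 F`: the
system decouples into two Riccati equations, solved by `E₀ / (3 E₀ t + 1)` and `F₀ / (3 F₀ t + 1)`.
Since `E₀ / (3 E₀ t + 1)` is the logarithmic derivative of `(3 E₀ t + 1) ^ (1 / 3)`, integrating
gives the explicit formulas.
-/

namespace Nil4RicciFlow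

/-- The functions `A`, `B`, `C`, `D` are, at time `t`, the components of a metric (hence positive)
and satisfy the Ricci flow equations for diagonal left-invariant metrics on Nil⁴. -/
structure IsSolutionAt (A B C D : ℝ → ℝ) (t : ℝ) : Prop where
  pos_A : 0 < A t
  pos_B : 0 < B t
  pos_C : 0 < C t
  pos_D : 0 < D t
  hasDerivAt_A : HasDerivAt A (B t / D t) t
  hasDerivAt_B : HasDerivAt B ((A t * C t - B t ^ 2) / (A t * D t)) t
  hasDerivAt_C : HasDerivAt C (-(C t ^ 2) / (B t * D t)) t
  hasDerivAt_D : HasDerivAt D (B t / A t + C t / B t) t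

namespace IsSolutionAt

variable {A B C D : ℝ → ℝ} {t : ℝ}

theorem of_logDeriv {E F : ℝ} (hA : 0 < A t) (hB : 0 < B t) (hC : 0 < C t) (hD : 0 < D t)
    (hE : B t / (A t * D t) = E) (hF : C t / (B t * D t) = F)
    (hA' : HasDerivAt A (E * A t) t) (hB' : HasDerivAt B ((F - E) * B t) t)
    (hC' : HasDerivAt C (-F * C t) t) (hD' : HasDerivAt D ((E + F) * D t) t) :
    IsSolutionAt A B C D t := by
  subst hE hF
  refine ⟨hA, hB, hC, hD, hA'.congr_deriv ?_, hB'.congr_deriv ?_, hC'.congr_deriv ?_,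
    hD'.congr_deriv ?_⟩ <;> field_simp

theorem hasDerivAt_E (h : IsSolutionAt A B C D t) :
    HasDerivAt (fun s => B s / (A s * D s)) (-3 * (B t / (A t * D t)) ^ 2) t := by
  obtain ⟨hA, hB, -, hD, hA', hB', -, hD'⟩ := h
  refine (hB'.fun_div (hA'.fun_mul hD') (mul_pos hA hD).ne').congr_deriv ?_
  field_simp
  ring

theorem hasDerivAt_F (h : IsSolutionAt A B C D t) :
    HasDerivAt (fun s => C s / (B s * D s)) (-3 * (C t / (B t * D t)) ^ 2) t := by
  obtain ⟨hA, hB, hC, hD, -, hB', hC', hD'⟩ := h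
  refine (hC'.fun_div (hB'.fun_mul hD') (mul_pos hB hD).ne').congr_deriv ?_
  field_simp
  ring

theorem hasDerivAt_mul_mul (h : IsSolutionAt A B C D t) :
    HasDerivAt (fun s => A s * B s * C s) 0 t := by
  obtain ⟨hA, hB, -, hD, hA', hB', hC', -⟩ := h
  refine ((hA'.fun_mul hB').fun_mul hC').congr_deriv ?_
  field_simp
  ring

theorem hasDerivAt_div_mul (h : IsSolutionAt A B C D t) :
    HasDerivAt (fun s => A s / (C s * D s)) 0 t := by
  obtain ⟨hA, hB, hC, hD, hA', -, hC', hD'⟩ := h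
  refine (hA'.fun_div (hC'.fun_mul hD') (mul_pos hC hD).ne').congr_deriv ?_
  field_simp
  ring

end IsSolutionAt

theorem eq_of_hasDerivAt_zero {f : ℝ → ℝ} {a b : ℝ} (hab : a ≤ b)
    (hf : ∀ s ∈ Set.Icc a b, HasDerivAt f 0 s) : f b = f a :=
  constant_of_has_deriv_right_zero (fun s hs => (hf s hs).continuousAt.continuousWithinAt)
    (fun s hs => (hf s (Set.Ico_subset_Icc_self hs)).hasDerivWithinAt) b (Set.right_mem_Icc.2 hab)

section Conservation

variable {A B C D : ℝ → ℝ} {t₀ t : ℝ}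

theorem mul_mul_eq_of_isSolutionAt (ht : t₀ ≤ t)
    (h : ∀ s ∈ Set.Icc t₀ t, IsSolutionAt A B C D s) : A t * B t * C t = A t₀ * B t₀ * C t₀ :=
  eq_of_hasDerivAt_zero ht fun s hs => (h s hs).hasDerivAt_mul_mul

theorem div_mul_eq_of_isSolutionAt (ht : t₀ ≤ t)
    (h : ∀ s ∈ Set.Icc t₀ t, IsSolutionAt A B C D s) :
    A t / (C t * D t) = A t₀ / (C t₀ * D t₀) :=
  eq_of_hasDerivAt_zero ht fun s hs => (h s hs).hasDerivAt_div_mul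

end Conservation

/-- The component `A` of the explicit solution, with initial value `l`; the parameter `E` is the
initial value of `B / (A D)`. -/
noncomputable def solA (l E t : ℝ) : ℝ := l * (3 * E * t + 1) ^ ((1 : ℝ) / 3)

/-- The component `B` of the explicit solution, with initial value `l`; the parameters `E` and `F`
are the initial values of `B / (A D)` and `C / (B D)`. -/
noncomputable def solB (l E F t : ℝ) : ℝ :=
  l * (3 * E * t + 1) ^ (-(1 : ℝ) / 3) * (3 * F * t + 1) ^ ((1 : ℝ) / 3)

/-- The component `C` of the explicit solution, with initial value `l`; the parameter `F` is the
initial value of `C / (B D)`. -/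
noncomputable def solC (l F t : ℝ) : ℝ := l * (3 * F * t + 1) ^ (-(1 : ℝ) / 3)

/-- The component `D` of the explicit solution, with initial value `l`; the parameters `E` and `F`
are the initial values of `B / (A D)` and `C / (B D)`. -/
noncomputable def solD (l E F t : ℝ) : ℝ :=
  l * (3 * E * t + 1) ^ ((1 : ℝ) / 3) * (3 * F * t + 1) ^ ((1 : ℝ) / 3)

section InitialValues

variable (l E F : ℝ)

theorem solA_zero : solA l E 0 = l := by simp [solA]

theorem solB_zero : solB l E F 0 = l := by simp [solB]

theorem solC_zero : solC l F 0 = l := by simp [solC]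

theorem solD_zero : solD l E F 0 = l := by simp [solD]

end InitialValues

section Positivity

variable {l E F t : ℝ}

theorem solA_pos (hl : 0 < l) (hE : 0 < 3 * E * t + 1) : 0 < solA l E t := by
  unfold solA
  positivity

theorem solB_pos (hl : 0 < l) (hE : 0 < 3 * E * t + 1) (hF : 0 < 3 * F * t + 1) :
    0 < solB l E F t := by
  unfold solB
  positivity

theorem solC_pos (hl : 0 < l) (hF : 0 < 3 * F * t + 1) : 0 < solC l F t := by
  unfold solC
  positivity

theorem solD_pos (hl : 0 < l) (hE : 0 < 3 * E * t + 1) (hF : 0 < 3 * F * t + 1) :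
    0 < solD l E F t := by
  unfold solD
  positivity

end Positivity

theorem rpow_neg_third {x : ℝ} (hx : 0 ≤ x) : x ^ (-(1 : ℝ) / 3) = (x ^ ((1 : ℝ) / 3))⁻¹ := by
  rw [neg_div, Real.rpow_neg hx]

theorem rpow_third_pow {x : ℝ} (hx : 0 ≤ x) : (x ^ ((1 : ℝ) / 3)) ^ 3 = x := by
  simpa using Real.rpow_inv_natCast_pow hx three_ne_zero

theorem mul_rpow_third {l x : ℝ} (hl : 0 ≤ l) (hx : 0 ≤ x) :
    l * x ^ ((1 : ℝ) / 3) = (l ^ 3 * x) ^ ((1 : ℝ) / 3) := by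
  have hcube : (l ^ 3) ^ ((1 : ℝ) / 3) = l := by
    simpa using Real.pow_rpow_inv_natCast hl three_ne_zero
  rw [Real.mul_rpow (by positivity) hx, hcube]

section Derivatives

theorem hasDerivAt_rpow_mul_add_one (k r : ℝ) {t : ℝ} (ht : k * t + 1 ≠ 0) :
    HasDerivAt (fun s : ℝ => (k * s + 1) ^ r) (r * k / (k * t + 1) * (k * t + 1) ^ r) t := by
  have hlin : HasDerivAt (fun s : ℝ => k * s + 1) k t := by
    simpa using ((hasDerivAt_id t).const_mul k).add_const 1
  refine (hlin.rpow_const (.inl ht)).congr_deriv ?_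
  rw [Real.rpow_sub_one ht]
  ring

variable {E F t : ℝ}

theorem hasDerivAt_solA (l : ℝ) (hE : 3 * E * t + 1 ≠ 0) :
    HasDerivAt (solA l E) (E / (3 * E * t + 1) * solA l E t) t := by
  refine ((hasDerivAt_rpow_mul_add_one (3 * E) (1 / 3) hE).const_mul l).congr_deriv ?_
  unfold solA
  ring

theorem hasDerivAt_solB (l : ℝ) (hE : 3 * E * t + 1 ≠ 0) (hF : 3 * F * t + 1 ≠ 0) :
    HasDerivAt (solB l E F)
      ((F / (3 * F * t + 1) - E / (3 * E * t + 1)) * solB l E F t) t := by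
  refine (((hasDerivAt_rpow_mul_add_one (3 * E) (-1 / 3) hE).const_mul l).mul
    (hasDerivAt_rpow_mul_add_one (3 * F) (1 / 3) hF)).congr_deriv ?_
  unfold solB
  ring

theorem hasDerivAt_solC (l : ℝ) (hF : 3 * F * t + 1 ≠ 0) :
    HasDerivAt (solC l F) (-(F / (3 * F * t + 1)) * solC l F t) t := by
  refine ((hasDerivAt_rpow_mul_add_one (3 * F) (-1 / 3) hF).const_mul l).congr_deriv ?_
  unfold solC
  ring

theorem hasDerivAt_solD (l : ℝ) (hE : 3 * E * t + 1 ≠ 0) (hF : 3 * F * t + 1 ≠ 0) :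
    HasDerivAt (solD l E F)
      ((E / (3 * E * t + 1) + F / (3 * F * t + 1)) * solD l E F t) t := by
  refine (((hasDerivAt_rpow_mul_add_one (3 * E) (1 / 3) hE).const_mul l).mul
    (hasDerivAt_rpow_mul_add_one (3 * F) (1 / 3) hF)).congr_deriv ?_
  unfold solD
  ring

end Derivatives

theorem solB_div_solA_mul_solD (l₁ l₂ l₄ : ℝ) {E F t : ℝ} (hE : 0 ≤ 3 * E * t + 1)
    (hF : 0 < 3 * F * t + 1) :
    solB l₂ E F t / (solA l₁ E t * solD l₄ E F t) = l₂ / (l₁ * l₄) / (3 * E * t + 1) := by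
  have hE₃ := rpow_third_pow hE
  have := Real.rpow_pos_of_pos hF (1 / 3)
  unfold solA solB solD
  rw [rpow_neg_third hE]
  generalize (3 * E * t + 1) ^ ((1 : ℝ) / 3) = p at *
  rw [← hE₃]
  field_simp

theorem solC_div_solB_mul_solD (l₂ l₃ l₄ : ℝ) {E F t : ℝ} (hE : 0 < 3 * E * t + 1)
    (hF : 0 ≤ 3 * F * t + 1) :
    solC l₃ F t / (solB l₂ E F t * solD l₄ E F t) = l₃ / (l₂ * l₄) / (3 * F * t + 1) := by
  have hF₃ := rpow_third_pow hF
  have := Real.rpow_pos_of_pos hE (1 / 3)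
  unfold solB solC solD
  rw [rpow_neg_third hE.le, rpow_neg_third hF]
  generalize (3 * F * t + 1) ^ ((1 : ℝ) / 3) = q at *
  rw [← hF₃]
  field_simp

theorem isSolutionAt_sol {l₁ l₂ l₃ l₄ E F t : ℝ} (h₁ : 0 < l₁) (h₂ : 0 < l₂) (h₃ : 0 < l₃)
    (h₄ : 0 < l₄) (hE : E = l₂ / (l₁ * l₄)) (hF : F = l₃ / (l₂ * l₄))
    (hEt : 0 < 3 * E * t + 1) (hFt : 0 < 3 * F * t + 1) :
    IsSolutionAt (solA l₁ E) (solB l₂ E F) (solC l₃ F) (solD l₄ E F) t :=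
  .of_logDeriv (solA_pos h₁ hEt) (solB_pos h₂ hEt hFt) (solC_pos h₃ hFt) (solD_pos h₄ hEt hFt)
    (by rw [solB_div_solA_mul_solD l₁ l₂ l₄ hEt.le hFt, ← hE])
    (by rw [solC_div_solB_mul_solD l₂ l₃ l₄ hEt hFt.le, ← hF])
    (hasDerivAt_solA l₁ hEt.ne') (hasDerivAt_solB l₂ hEt.ne' hFt.ne')
    (hasDerivAt_solC l₃ hFt.ne') (hasDerivAt_solD l₄ hEt.ne' hFt.ne')

section Asymptotics

theorem tendsto_mul_add_one_atTop {k : ℝ} (hk : 0 < k) :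
    Tendsto (fun s : ℝ => k * s + 1) atTop atTop :=
  tendsto_atTop_add_const_right _ _ (tendsto_id.const_mul_atTop hk)

theorem tendsto_mul_add_one_rpow_atTop {k r : ℝ} (hk : 0 < k) (hr : 0 < r) :
    Tendsto (fun s : ℝ => (k * s + 1) ^ r) atTop atTop :=
  (tendsto_rpow_atTop hr).comp (tendsto_mul_add_one_atTop hk)

theorem tendsto_mul_add_one_div_mul_add_one (a : ℝ) {b : ℝ} (hb : 0 < b) :
    Tendsto (fun s : ℝ => (a * s + 1) / (b * s + 1)) atTop (nhds (a / b)) := by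
  have hlim : Tendsto (fun s : ℝ => a / b + (1 - a / b) / (b * s + 1)) atTop (nhds (a / b)) := by
    simpa using ((tendsto_mul_add_one_atTop hb).const_div_atTop (1 - a / b)).const_add (a / b)
  refine hlim.congr' ?_
  filter_upwards [eventually_ge_atTop 0] with s hs
  have : 0 < b * s + 1 := by positivity
  field_simp
  ring

variable {l E F : ℝ}

theorem tendsto_solA (hl : 0 < l) (hE : 0 < E) : Tendsto (solA l E) atTop atTop :=
  (tendsto_mul_add_one_rpow_atTop (by positivity) (by norm_num)).const_mul_atTop hl

theorem tendsto_solB (l : ℝ) (hE : 0 < E) (hF : 0 < F) :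
    Tendsto (solB l E F) atTop (nhds (l * (F / E) ^ ((1 : ℝ) / 3))) := by
  have hratio : Tendsto (fun s : ℝ => (3 * F * s + 1) / (3 * E * s + 1)) atTop (nhds (F / E)) := by
    simpa only [mul_div_mul_left F E three_ne_zero] using
      tendsto_mul_add_one_div_mul_add_one (3 * F) (b := 3 * E) (by positivity)
  refine ((hratio.rpow_const (.inr (by norm_num))).const_mul l).congr' ?_
  filter_upwards [eventually_ge_atTop 0] with s hs
  have hEs : 0 ≤ 3 * E * s + 1 := by positivity
  have hFs : 0 ≤ 3 * F * s + 1 := by positivity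
  rw [solB, rpow_neg_third hEs, Real.div_rpow hFs hEs]
  ring

theorem tendsto_solB_of_eq_div {l₁ l₂ l₃ l₄ : ℝ} (h₁ : 0 < l₁) (h₂ : 0 < l₂) (h₃ : 0 < l₃)
    (h₄ : 0 < l₄) (hE : E = l₂ / (l₁ * l₄)) (hF : F = l₃ / (l₂ * l₄)) :
    Tendsto (solB l₂ E F) atTop (nhds ((l₁ * l₂ * l₃) ^ ((1 : ℝ) / 3))) := by
  have hE₀ : 0 < E := hE ▸ by positivity
  have hF₀ : 0 < F := hF ▸ by positivity
  have hcube : l₂ ^ 3 * (F / E) = l₁ * l₂ * l₃ := by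
    rw [hE, hF]
    field_simp
  rw [← hcube, ← mul_rpow_third h₂.le (by positivity)]
  exact tendsto_solB l₂ hE₀ hF₀

theorem tendsto_solC (l : ℝ) (hF : 0 < F) : Tendsto (solC l F) atTop (nhds 0) := by
  have hpow : Tendsto (fun s : ℝ => (3 * F * s + 1) ^ (-(1 : ℝ) / 3)) atTop (nhds 0) := by
    rw [neg_div]
    exact (tendsto_rpow_neg_atTop (by norm_num)).comp (tendsto_mul_add_one_atTop (by positivity))
  exact mul_zero l ▸ hpow.const_mul l

theorem tendsto_solD (hl : 0 < l) (hE : 0 < E) (hF : 0 < F) :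
    Tendsto (solD l E F) atTop atTop :=
  (tendsto_solA hl hE).atTop_mul_atTop₀
    (tendsto_mul_add_one_rpow_atTop (by positivity) (by norm_num))

end Asymptotics

end Nil4RicciFlow

open Nil4RicciFlow

/-- Explicit Ricci flow solution on Nil⁴ (class U1[3]). -/
theorem stmt11 (l1 l2 l3 l4 E0 F0 : ℝ)
    (hl1 : 0 < l1) (hl2 : 0 < l2) (hl3 : 0 < l3) (hl4 : 0 < l4)
    (hE0 : E0 = l2 / (l1 * l4)) (hF0 : F0 = l3 / (l2 * l4))
    (A B C D : ℝ → ℝ)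
    (hA : ∀ t, A t = l1 * (3 * E0 * t + 1) ^ ((1 : ℝ) / 3))
    (hB : ∀ t, B t = l2 * (3 * E0 * t + 1) ^ (-(1 : ℝ) / 3) *
      (3 * F0 * t + 1) ^ ((1 : ℝ) / 3))
    (hC : ∀ t, C t = l3 * (3 * F0 * t + 1) ^ (-(1 : ℝ) / 3))
    (hD : ∀ t, D t = l4 * (3 * E0 * t + 1) ^ ((1 : ℝ) / 3) *
      (3 * F0 * t + 1) ^ ((1 : ℝ) / 3)) :
    (∀ t ≥ (0 : ℝ), 0 < A t ∧ 0 < B t ∧ 0 < C t ∧ 0 < D t) ∧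
    (A 0 = l1 ∧ B 0 = l2 ∧ C 0 = l3 ∧ D 0 = l4) ∧
    (∀ t ≥ (0 : ℝ),
      HasDerivAt A (B t / D t) t ∧
      HasDerivAt B ((A t * C t - B t ^ 2) / (A t * D t)) t ∧
      HasDerivAt C (-(C t ^ 2) / (B t * D t)) t ∧
      HasDerivAt D (B t / A t + C t / B t) t) ∧
    (∀ t ≥ (0 : ℝ), A t * B t * C t = l1 * l2 * l3 ∧
      A t / (C t * D t) = l1 / (l3 * l4)) ∧
    (∀ t ≥ (0 : ℝ),
      HasDerivAt (fun s => B s / (A s * D s)) (-3 * (B t / (A t * D t)) ^ 2) t ∧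
      HasDerivAt (fun s => C s / (B s * D s)) (-3 * (C t / (B t * D t)) ^ 2) t) ∧
    Tendsto A atTop atTop ∧
    Tendsto B atTop (nhds ((l1 * l2 * l3) ^ ((1 : ℝ) / 3))) ∧
    Tendsto C atTop (nhds 0) ∧
    Tendsto D atTop atTop := by
  obtain rfl : A = solA l1 E0 := funext hA
  obtain rfl : B = solB l2 E0 F0 := funext hB
  obtain rfl : C = solC l3 F0 := funext hC
  obtain rfl : D = solD l4 E0 F0 := funext hD
  have hE : 0 < E0 := hE0 ▸ by positivity
  have hF : 0 < F0 := hF0 ▸ by positivity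
  have hsol : ∀ t ≥ 0, IsSolutionAt (solA l1 E0) (solB l2 E0 F0) (solC l3 F0) (solD l4 E0 F0) t :=
    fun t ht => isSolutionAt_sol hl1 hl2 hl3 hl4 hE0 hF0 (by positivity) (by positivity)
  refine ⟨fun t ht => ?_, ⟨solA_zero .., solB_zero .., solC_zero .., solD_zero ..⟩,
    fun t ht => ?_, fun t ht => ⟨?_, ?_⟩,
    fun t ht => ⟨(hsol t ht).hasDerivAt_E, (hsol t ht).hasDerivAt_F⟩,
    tendsto_solA hl1 hE, tendsto_solB_of_eq_div hl1 hl2 hl3 hl4 hE0 hF0, tendsto_solC l3 hF,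
    tendsto_solD hl4 hE hF⟩
  · obtain ⟨pos_A, pos_B, pos_C, pos_D, -⟩ := hsol t ht
    exact ⟨pos_A, pos_B, pos_C, pos_D⟩
  · obtain ⟨-, -, -, -, deriv_A, deriv_B, deriv_C, deriv_D⟩ := hsol t ht
    exact ⟨deriv_A, deriv_B, deriv_C, deriv_D⟩
  · simpa only [solA_zero, solB_zero, solC_zero] using
      mul_mul_eq_of_isSolutionAt ht fun s hs => hsol s hs.1
  · simpa only [solA_zero, solC_zero, solD_zero] using
      div_mul_eq_of_isSolutionAt ht fun s hs => hsol s hs.1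
end

section
/- Let λ1, λ2, λ3, λ4 > 0. Suppose A, B, C, D : [0,∞) → ℝ are differentiable, strictly positive, and satisfy A' = B/C + C/B + 2, B' = C/A + D/C - B²/(AC), C' = B/A + D/B - C²/(AB), D' = -D²/(BC), with A(0) = λ1, B(0) = λ2, C(0) = λ3, D(0) = λ4. Then for all t ≥ 0: B(t)C(t)D(t)² = λ2λ3λ4², A(t)D(t)(B(t) - C(t)) = λ1λ4(λ2 - λ3), and D(t) = λ4(1 + (3λ4/(λ2λ3))t)^{-1/3}. -/
/-!
The derivatives of `B C D²` and `A D (B - C)` along the flow cancel identically, so both quantities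
are constant. Put `κ = B C D²`. If `κ = 0`, then `D` is identically zero. Otherwise `D` never
vanishes, so its sign is constant, and the last equation decouples into `D' = -D⁴ / κ`, that is
`(D⁻³)' = 3 / κ`; integrating and taking the cube root gives `D`.
-/

theorem eq_of_hasDerivWithinAt_zero {E : Type*} [NormedAddCommGroup E] [NormedSpace ℝ E]
    {f : ℝ → E} {s : Set ℝ} {x y : ℝ} (hs : Convex ℝ s)
    (hf : ∀ z ∈ s, HasDerivWithinAt f 0 s z) (hx : x ∈ s) (hy : y ∈ s) : f x = f y := by
  simpa [sub_eq_zero] using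
    hs.norm_image_sub_le_of_norm_hasDerivWithin_le hf (fun _ _ ↦ norm_zero.le) hy hx

theorem div_pos_of_isPreconnected {X : Type*} [TopologicalSpace X] {f : X → ℝ} {s : Set X}
    {x y : X} (hs : IsPreconnected s) (hf : ContinuousOn f s) (hne : ∀ z ∈ s, f z ≠ 0)
    (hx : x ∈ s) (hy : y ∈ s) : 0 < f x / f y := by
  by_contra! hle
  obtain ⟨z, hz, hz0⟩ : (0 : ℝ) ∈ (fun z ↦ f z / f y) '' s :=
    hs.intermediate_value hx hy (hf.div_const (f y))
      ⟨hle, zero_le_one.trans_eq (div_self (hne y hy)).symm⟩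
  exact div_ne_zero (hne z hz) (hne y hy) hz0

section PowerDecay

variable {f : ℝ → ℝ} {s : Set ℝ} {k t₀ t : ℝ} {n : ℕ}

theorem inv_pow_eq_of_hasDerivWithinAt_neg_mul_pow (hs : Convex ℝ s) (hne : ∀ x ∈ s, f x ≠ 0)
    (hf : ∀ x ∈ s, HasDerivWithinAt f (-(k * f x ^ (n + 1))) s x) (ht₀ : t₀ ∈ s) (ht : t ∈ s) :
    (f t ^ n)⁻¹ = (f t₀ ^ n)⁻¹ + n * k * (t - t₀) := by
  have hderiv : ∀ x ∈ s, HasDerivWithinAt (fun x ↦ (f x ^ n)⁻¹ - n * k * x) 0 s x := by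
    intro x hx
    refine ((((hf x hx).pow n).inv (pow_ne_zero n (hne x hx))).sub
      ((hasDerivWithinAt_id x s).const_mul (n * k))).congr_deriv ?_
    have hfx := hne x hx
    cases n with
    | zero => simp
    | succ m =>
      simp only [Pi.pow_apply, Nat.add_sub_cancel]
      field_simp
      ring
  linarith [eq_of_hasDerivWithinAt_zero hs hderiv ht ht₀]

theorem eq_mul_rpow_of_hasDerivWithinAt_neg_mul_pow (hs : Convex ℝ s) (hn : n ≠ 0)
    (hne : ∀ x ∈ s, f x ≠ 0) (hf : ∀ x ∈ s, HasDerivWithinAt f (-(k * f x ^ (n + 1))) s x)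
    (ht₀ : t₀ ∈ s) (ht : t ∈ s) :
    f t = f t₀ * (1 + n * k * f t₀ ^ n * (t - t₀)) ^ (-1 / n : ℝ) := by
  have hf₀ : f t₀ ≠ 0 := hne t₀ ht₀
  have hratio : 0 < f t / f t₀ :=
    div_pos_of_isPreconnected hs.isPreconnected (fun x hx ↦ (hf x hx).continuousWithinAt) hne ht ht₀
  have hpow : 1 + n * k * f t₀ ^ n * (t - t₀) = ((f t / f t₀) ^ n)⁻¹ := by
    rw [div_pow, inv_div, div_eq_mul_inv,
      inv_pow_eq_of_hasDerivWithinAt_neg_mul_pow hs hne hf ht₀ ht]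
    field_simp
  rw [hpow, neg_div, one_div, Real.rpow_neg (by positivity), Real.inv_rpow (by positivity), inv_inv,
    Real.pow_rpow_inv_natCast hratio.le hn, mul_div_cancel₀ _ hf₀]

end PowerDecay

/-- The Ricci flow equations on the time set `s` for the components of a diagonal left-invariant
metric `A θ₁² + B θ₂² + C θ₃² + D θ₄²` on the Lie group `Sol₁⁴`. The signature is arbitrary, and the
conditions `≠ 0` keep the quotients clear of the junk value `x / 0 = 0`. -/
structure IsSolRicciFlowOn (A B C D : ℝ → ℝ) (s : Set ℝ) : Prop where
  A_ne_zero : ∀ t ∈ s, A t ≠ 0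
  B_ne_zero : ∀ t ∈ s, B t ≠ 0
  C_ne_zero : ∀ t ∈ s, C t ≠ 0
  deriv_A : ∀ t ∈ s, HasDerivWithinAt A (B t / C t + C t / B t + 2) s t
  deriv_B : ∀ t ∈ s, HasDerivWithinAt B (C t / A t + D t / C t - B t ^ 2 / (A t * C t)) s t
  deriv_C : ∀ t ∈ s, HasDerivWithinAt C (B t / A t + D t / B t - C t ^ 2 / (A t * B t)) s t
  deriv_D : ∀ t ∈ s, HasDerivWithinAt D (-(D t ^ 2) / (B t * C t)) s t

namespace IsSolRicciFlowOn

variable {A B C D : ℝ → ℝ} {s : Set ℝ} {t₀ t : ℝ}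

theorem B_mul_C_mul_D_sq_eq (h : IsSolRicciFlowOn A B C D s) (hs : Convex ℝ s) (ht₀ : t₀ ∈ s)
    (ht : t ∈ s) : B t * C t * D t ^ 2 = B t₀ * C t₀ * D t₀ ^ 2 := by
  refine eq_of_hasDerivWithinAt_zero (f := fun x ↦ B x * C x * D x ^ 2) hs
    (fun x hx ↦ ?_) ht ht₀
  refine (((h.deriv_B x hx).mul (h.deriv_C x hx)).mul ((h.deriv_D x hx).pow 2)).congr_deriv ?_
  have hA := h.A_ne_zero x hx
  have hB := h.B_ne_zero x hx
  have hC := h.C_ne_zero x hx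
  simp only [Pi.mul_apply, Pi.pow_apply]
  field_simp
  push_cast
  ring

theorem A_mul_D_mul_B_sub_C_eq (h : IsSolRicciFlowOn A B C D s) (hs : Convex ℝ s) (ht₀ : t₀ ∈ s)
    (ht : t ∈ s) : A t * D t * (B t - C t) = A t₀ * D t₀ * (B t₀ - C t₀) := by
  refine eq_of_hasDerivWithinAt_zero (f := fun x ↦ A x * D x * (B x - C x)) hs
    (fun x hx ↦ ?_) ht ht₀
  refine (((h.deriv_A x hx).mul (h.deriv_D x hx)).mul
    ((h.deriv_B x hx).sub (h.deriv_C x hx))).congr_deriv ?_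
  have hA := h.A_ne_zero x hx
  have hB := h.B_ne_zero x hx
  have hC := h.C_ne_zero x hx
  simp only [Pi.mul_apply, Pi.sub_apply]
  field_simp
  ring

theorem D_eq_zero_iff (h : IsSolRicciFlowOn A B C D s) (hs : Convex ℝ s) (ht₀ : t₀ ∈ s)
    (ht : t ∈ s) : D t = 0 ↔ D t₀ = 0 := by
  have hconst := h.B_mul_C_mul_D_sq_eq hs ht₀ ht
  have hBC : ∀ x ∈ s, B x * C x ≠ 0 := fun x hx ↦ mul_ne_zero (h.B_ne_zero x hx) (h.C_ne_zero x hx)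
  constructor <;> intro hD <;> simpa [hD, hBC t₀ ht₀, hBC t ht] using hconst

theorem hasDerivWithinAt_D (h : IsSolRicciFlowOn A B C D s) (hs : Convex ℝ s)
    (ht₀ : t₀ ∈ s) (ht : t ∈ s) :
    HasDerivWithinAt D (-((B t₀ * C t₀ * D t₀ ^ 2)⁻¹ * D t ^ 4)) s t := by
  refine (h.deriv_D t ht).congr_deriv ?_
  rw [← h.B_mul_C_mul_D_sq_eq hs ht₀ ht]
  have hB := h.B_ne_zero t ht
  have hC := h.C_ne_zero t ht
  field_simp

theorem D_eq_mul_rpow (h : IsSolRicciFlowOn A B C D s) (hs : Convex ℝ s) (ht₀ : t₀ ∈ s)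
    (ht : t ∈ s) :
    D t = D t₀ * (1 + 3 * D t₀ / (B t₀ * C t₀) * (t - t₀)) ^ (-(1 : ℝ) / 3) := by
  by_cases hD₀ : D t₀ = 0
  · rw [(h.D_eq_zero_iff hs ht₀ ht).2 hD₀, hD₀, zero_mul]
  have hD : ∀ x ∈ s, D x ≠ 0 := fun x hx ↦ (h.D_eq_zero_iff hs ht₀ hx).not.2 hD₀
  have hrate : 3 * (B t₀ * C t₀ * D t₀ ^ 2)⁻¹ * D t₀ ^ 3 = 3 * D t₀ / (B t₀ * C t₀) := by
    have hB := h.B_ne_zero t₀ ht₀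
    have hC := h.C_ne_zero t₀ ht₀
    field_simp
  simpa only [Nat.cast_ofNat, hrate] using
    eq_mul_rpow_of_hasDerivWithinAt_neg_mul_pow hs three_ne_zero hD
      (fun _ hx ↦ h.hasDerivWithinAt_D hs ht₀ hx) ht₀ ht

end IsSolRicciFlowOn

theorem stmt12_general {l1 l2 l3 l4 : ℝ} {A B C D : ℝ → ℝ} {s : Set ℝ}
    (h : IsSolRicciFlowOn A B C D s) (hs : Convex ℝ s) (h0 : 0 ∈ s)
    (hA0 : A 0 = l1) (hB0 : B 0 = l2) (hC0 : C 0 = l3) (hD0 : D 0 = l4) :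
    (∀ t ∈ s, B t * C t * D t ^ 2 = l2 * l3 * l4 ^ 2) ∧
    (∀ t ∈ s, A t * D t * (B t - C t) = l1 * l4 * (l2 - l3)) ∧
    (∀ t ∈ s, D t = l4 * (1 + (3 * l4 / (l2 * l3)) * t) ^ (-(1 : ℝ) / 3)) := by
  subst hA0 hB0 hC0 hD0
  exact ⟨fun _ ht ↦ h.B_mul_C_mul_D_sq_eq hs h0 ht, fun _ ht ↦ h.A_mul_D_mul_B_sub_C_eq hs h0 ht,
    fun t ht ↦ by simpa only [sub_zero] using h.D_eq_mul_rpow hs h0 ht⟩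

/-- Ricci flow on Sol₁⁴ (class U3I0, case (i) of Proposition 6): conserved
quantities `BCD² = λ2λ3λ4²`, `AD(B−C) = λ1λ4(λ2−λ3)`, and the explicit
formula for `D`. -/
theorem stmt12 (l1 l2 l3 l4 : ℝ)
    (hl1 : 0 < l1) (hl2 : 0 < l2) (hl3 : 0 < l3) (hl4 : 0 < l4)
    (A B C D : ℝ → ℝ)
    (hA0 : A 0 = l1) (hB0 : B 0 = l2) (hC0 : C 0 = l3) (hD0 : D 0 = l4)
    (hApos : ∀ t ≥ (0 : ℝ), 0 < A t)
    (hBpos : ∀ t ≥ (0 : ℝ), 0 < B t)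
    (hCpos : ∀ t ≥ (0 : ℝ), 0 < C t)
    (hDpos : ∀ t ≥ (0 : ℝ), 0 < D t)
    (hA' : ∀ t ≥ (0 : ℝ), HasDerivAt A (B t / C t + C t / B t + 2) t)
    (hB' : ∀ t ≥ (0 : ℝ), HasDerivAt B
      (C t / A t + D t / C t - B t ^ 2 / (A t * C t)) t)
    (hC' : ∀ t ≥ (0 : ℝ), HasDerivAt C
      (B t / A t + D t / B t - C t ^ 2 / (A t * B t)) t)
    (hD' : ∀ t ≥ (0 : ℝ), HasDerivAt D (-(D t ^ 2) / (B t * C t)) t) :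
    (∀ t ≥ (0 : ℝ), B t * C t * D t ^ 2 = l2 * l3 * l4 ^ 2) ∧
    (∀ t ≥ (0 : ℝ), A t * D t * (B t - C t) = l1 * l4 * (l2 - l3)) ∧
    (∀ t ≥ (0 : ℝ), D t = l4 * (1 + (3 * l4 / (l2 * l3)) * t) ^ (-(1 : ℝ) / 3)) := by
  have flow : IsSolRicciFlowOn A B C D (Set.Ici 0) :=
    ⟨fun t ht ↦ (hApos t ht).ne', fun t ht ↦ (hBpos t ht).ne', fun t ht ↦ (hCpos t ht).ne',
      fun t ht ↦ (hA' t ht).hasDerivWithinAt, fun t ht ↦ (hB' t ht).hasDerivWithinAt,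
      fun t ht ↦ (hC' t ht).hasDerivWithinAt, fun t ht ↦ (hD' t ht).hasDerivWithinAt⟩
  exact stmt12_general flow (convex_Ici 0) Set.self_mem_Ici hA0 hB0 hC0 hD0
end

section
/- Let α ∈ ℝ with α² < 1. Suppose A, B, C, D : [0,∞) → ℝ are differentiable, strictly positive, and satisfy A' = (B² + 2(1+α²)BC + (1-α²)²C²)/(BC), B' = (AD - B² + (1-α²)²C²)/(AC), C' = (AD + B² - (1-α²)²C²)/(AB), D' = -D²/(BC). Then the function B - (1-α²)C satisfies (B - (1-α²)C)'(t) = ((A(t)D(t) - (B(t) + (1-α²)C(t))²)/(A(t)B(t)C(t)))·(B(t) - (1-α²)C(t)) for all t ≥ 0. In particular, if B(0) = (1-α²)C(0), then B(t) = (1-α²)C(t) for all t ≥ 0. -/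
/-!
With `κ = 1 - α²`, put the derivative of `B - κ C` over the common denominator `A B C`. Its
numerator is `A D (B - κ C) - (B² - κ² C²) (B + κ C)`, which has `B - κ C` as a factor. Hence
`B - κ C` solves a homogeneous linear equation with continuous coefficient, and by Grönwall's
inequality it vanishes identically if it vanishes initially.
-/

open Set

section LinearODE

variable {R E : Type*} [SeminormedRing R] [NormedAddCommGroup E] [NormedSpace ℝ E]
  [Module R E] [IsBoundedSMul R E] {f : ℝ → E} {c : ℝ → R} {a b : ℝ}

theorem eqOn_zero_of_hasDerivWithinAt_smul_self_Icc (hc : ContinuousOn c (Icc a b))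
    (hf : ContinuousOn f (Icc a b))
    (hf' : ∀ t ∈ Ico a b, HasDerivWithinAt f (c t • f t) (Ici t) t) (ha : f a = 0) :
    EqOn f 0 (Icc a b) := by
  obtain ⟨K, hK⟩ := isCompact_Icc.exists_bound_of_continuousOn hc
  have norm_deriv_le : ∀ t ∈ Ico a b, ‖c t • f t‖ ≤ K * ‖f t‖ := fun t ht =>
    (norm_smul_le _ _).trans <|
      mul_le_mul_of_nonneg_right (hK t (Ico_subset_Icc_self ht)) (norm_nonneg _)
  exact eq_zero_of_abs_deriv_le_mul_abs_self_of_eq_zero_right hf hf' ha norm_deriv_le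

theorem eqOn_zero_of_hasDerivWithinAt_smul_self_Ici (hc : ContinuousOn c (Ici a))
    (hf : ContinuousOn f (Ici a))
    (hf' : ∀ t ≥ a, HasDerivWithinAt f (c t • f t) (Ici t) t) (ha : f a = 0) :
    EqOn f 0 (Ici a) := fun _ ht =>
  eqOn_zero_of_hasDerivWithinAt_smul_self_Icc (hc.mono Icc_subset_Ici_self)
    (hf.mono Icc_subset_Ici_self) (fun s hs => hf' s hs.1) ha (right_mem_Icc.mpr ht)

end LinearODE

theorem flow_velocity_sub_mul_eq_mul_sub {K : Type*} [Field K] {A B C : K} (κ D : K)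
    (hA : A ≠ 0) (hB : B ≠ 0) (hC : C ≠ 0) :
    (A * D - B ^ 2 + κ ^ 2 * C ^ 2) / (A * C) - κ * ((A * D + B ^ 2 - κ ^ 2 * C ^ 2) / (A * B)) =
      (A * D - (B + κ * C) ^ 2) / (A * B * C) * (B - κ * C) := by
  field_simp
  ring

theorem hasDerivAt_sub_const_mul_of_flow {𝕜 : Type*} [NontriviallyNormedField 𝕜] {κ t : 𝕜}
    {A B C D : 𝕜 → 𝕜} (hA : A t ≠ 0) (hB : B t ≠ 0) (hC : C t ≠ 0)
    (hB' : HasDerivAt B ((A t * D t - B t ^ 2 + κ ^ 2 * C t ^ 2) / (A t * C t)) t)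
    (hC' : HasDerivAt C ((A t * D t + B t ^ 2 - κ ^ 2 * C t ^ 2) / (A t * B t)) t) :
    HasDerivAt (fun s => B s - κ * C s)
      ((A t * D t - (B t + κ * C t) ^ 2) / (A t * B t * C t) * (B t - κ * C t)) t :=
  (hB'.sub (hC'.const_mul κ)).congr_deriv <|
    flow_velocity_sub_mul_eq_mul_sub κ (D t) hA hB hC

theorem stmt14_general {κ a : ℝ} {A B C D : ℝ → ℝ}
    (hA : ∀ t ≥ a, A t ≠ 0) (hB : ∀ t ≥ a, B t ≠ 0) (hC : ∀ t ≥ a, C t ≠ 0)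
    (hAcont : ContinuousOn A (Ici a)) (hDcont : ContinuousOn D (Ici a))
    (hB' : ∀ t ≥ a, HasDerivAt B
      ((A t * D t - B t ^ 2 + κ ^ 2 * C t ^ 2) / (A t * C t)) t)
    (hC' : ∀ t ≥ a, HasDerivAt C
      ((A t * D t + B t ^ 2 - κ ^ 2 * C t ^ 2) / (A t * B t)) t) :
    (∀ t ≥ a, HasDerivAt (fun s => B s - κ * C s)
      ((A t * D t - (B t + κ * C t) ^ 2) / (A t * B t * C t) * (B t - κ * C t)) t) ∧
    (B a = κ * C a → ∀ t ≥ a, B t = κ * C t) := by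
  have hderiv : ∀ t ≥ a, HasDerivAt (fun s => B s - κ * C s)
      ((A t * D t - (B t + κ * C t) ^ 2) / (A t * B t * C t) * (B t - κ * C t)) t := fun t ht =>
    hasDerivAt_sub_const_mul_of_flow (hA t ht) (hB t ht) (hC t ht) (hB' t ht) (hC' t ht)
  refine ⟨hderiv, fun h₀ t ht => sub_eq_zero.mp ?_⟩
  have hBcont : ContinuousOn B (Ici a) := HasDerivAt.continuousOn hB'
  have hCcont : ContinuousOn C (Ici a) := HasDerivAt.continuousOn hC'
  have hcoeff : ContinuousOn
      (fun t => (A t * D t - (B t + κ * C t) ^ 2) / (A t * B t * C t)) (Ici a) :=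
    ContinuousOn.div (by fun_prop) (by fun_prop) fun t ht =>
      mul_ne_zero (mul_ne_zero (hA t ht) (hB t ht)) (hC t ht)
  exact eqOn_zero_of_hasDerivWithinAt_smul_self_Ici hcoeff (HasDerivAt.continuousOn hderiv)
    (fun t ht => (hderiv t ht).hasDerivWithinAt) (sub_eq_zero.mpr h₀) ht

/-- Ricci flow on Sol₁⁴ (class U3I0, case (ii) of Proposition 6): the relation
`B = (1 - α²) C` is preserved by the flow. -/
theorem stmt14 (α : ℝ) (hα : α ^ 2 < 1)
    (A B C D : ℝ → ℝ)
    (hApos : ∀ t ≥ (0 : ℝ), 0 < A t)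
    (hBpos : ∀ t ≥ (0 : ℝ), 0 < B t)
    (hCpos : ∀ t ≥ (0 : ℝ), 0 < C t)
    (hDpos : ∀ t ≥ (0 : ℝ), 0 < D t)
    (hA' : ∀ t ≥ (0 : ℝ), HasDerivAt A
      ((B t ^ 2 + 2 * (1 + α ^ 2) * B t * C t + (1 - α ^ 2) ^ 2 * C t ^ 2) /
        (B t * C t)) t)
    (hB' : ∀ t ≥ (0 : ℝ), HasDerivAt B
      ((A t * D t - B t ^ 2 + (1 - α ^ 2) ^ 2 * C t ^ 2) / (A t * C t)) t)
    (hC' : ∀ t ≥ (0 : ℝ), HasDerivAt C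
      ((A t * D t + B t ^ 2 - (1 - α ^ 2) ^ 2 * C t ^ 2) / (A t * B t)) t)
    (hD' : ∀ t ≥ (0 : ℝ), HasDerivAt D (-(D t ^ 2) / (B t * C t)) t) :
    (∀ t ≥ (0 : ℝ), HasDerivAt (fun s => B s - (1 - α ^ 2) * C s)
      ((A t * D t - (B t + (1 - α ^ 2) * C t) ^ 2) / (A t * B t * C t) *
        (B t - (1 - α ^ 2) * C t)) t) ∧
    (B 0 = (1 - α ^ 2) * C 0 → ∀ t ≥ (0 : ℝ), B t = (1 - α ^ 2) * C t) :=
  stmt14_general (fun t ht => (hApos t ht).ne') (fun t ht => (hBpos t ht).ne')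
    (fun t ht => (hCpos t ht).ne') (HasDerivAt.continuousOn hA') (HasDerivAt.continuousOn hD')
    hB' hC'
end

section
/- Let λ1, λ2, λ3, λ4 > 0. Suppose A, B, C, D : [0,∞) → ℝ are differentiable, strictly positive, and satisfy A' = C/B + B/C - 2, B' = -B²/(AC) + C/A + D/C, C' = -C²/(AB) + B/A + D/B, D' = -D²/(BC), with A(0) = λ1, B(0) = λ2, C(0) = λ3, D(0) = λ4. Then for all t ≥ 0: B(t)C(t)D(t)² = λ2λ3λ4², A(t)D(t)(B(t) + C(t)) = λ1λ4(λ2 + λ3), and D(t) = λ4(1 + (3λ4/(λ2λ3))t)^{-1/3}. -/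
/-!
The flow preserves two products. First, `(BC)' = 2D` while `D'/D = -D/(BC)`, so the logarithmic
derivative of `BCD²` vanishes. Second, with `κ = (AD - (B - C)²) / (ABC)`, one has
`(B + C)' = κ (B + C)` and `(AD)' = -κ AD`, so `AD(B + C)` is constant. Inserting the first
conserved quantity `K = BCD²` into the equation for `D` gives the Bernoulli equation
`D' = -K⁻¹ D⁴`, which becomes linear in `D⁻³`.
-/

open Set

section MeanValue

variable {𝕜 E : Type*} [RCLike 𝕜] [NormedAddCommGroup E] [NormedSpace 𝕜 E] {f : 𝕜 → E}
  {I : Set 𝕜} {x y : 𝕜}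

theorem eq_of_hasDerivWithinAt_zero_s16 (hI : Convex ℝ I)
    (hf : ∀ x ∈ I, HasDerivWithinAt f 0 I x) (hx : x ∈ I) (hy : y ∈ I) : f y = f x := by
  have hle : ‖f y - f x‖ ≤ 0 * ‖y - x‖ :=
    hI.norm_image_sub_le_of_norm_hasDerivWithin_le hf (fun _ _ ↦ norm_zero.le) hx hy
  rw [zero_mul] at hle
  exact sub_eq_zero.mp (norm_le_zero_iff.mp hle)

theorem eq_add_smul_of_hasDerivWithinAt_const {c : E} (hI : Convex ℝ I)
    (hf : ∀ x ∈ I, HasDerivWithinAt f c I x) (hx : x ∈ I) (hy : y ∈ I) :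
    f y = f x + (y - x) • c := by
  have hderiv : ∀ z ∈ I, HasDerivWithinAt (fun w ↦ f w - (w - x) • c) 0 I z := fun z hz ↦ by
    simpa only [id_eq, one_smul, sub_self] using
      (hf z hz).fun_sub (((hasDerivWithinAt_id z I).sub_const x).smul_const c)
  have hconst := eq_of_hasDerivWithinAt_zero_s16 hI hderiv hx hy
  rwa [sub_self, zero_smul, sub_zero, sub_eq_iff_eq_add] at hconst

end MeanValue

theorem div_pos_of_continuousOn_of_ne_zero {X α : Type*} [TopologicalSpace X] [Field α]
    [LinearOrder α] [IsStrictOrderedRing α] [TopologicalSpace α] [OrderTopology α]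
    {f : X → α} {S : Set X} (hS : IsPreconnected S) (hf : ContinuousOn f S)
    (hne : ∀ x ∈ S, f x ≠ 0) {x y : X} (hx : x ∈ S) (hy : y ∈ S) : 0 < f x / f y := by
  by_contra! hle
  have hmem : (0 : α) ∈ Icc (f x / f y) (f y / f y) :=
    ⟨hle, (div_self (hne y hy)).symm ▸ zero_le_one⟩
  obtain ⟨z, hz, hz0⟩ := hS.intermediate_value hx hy (hf.div_const (f y)) hmem
  exact div_ne_zero (hne z hz) (hne y hy) hz0

theorem inv_pow_eq_of_bernoulli {𝕜 : Type*} [RCLike 𝕜] {y : 𝕜 → 𝕜} {k : 𝕜} {n : ℕ} {I : Set 𝕜}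
    (hI : Convex ℝ I) (hne : ∀ t ∈ I, y t ≠ 0)
    (hy : ∀ t ∈ I, HasDerivWithinAt y (-k * y t ^ (n + 1)) I t) {s t : 𝕜} (hs : s ∈ I)
    (ht : t ∈ I) : (y t ^ n)⁻¹ = (y s ^ n)⁻¹ + (t - s) * (n * k) := by
  refine eq_add_smul_of_hasDerivWithinAt_const (f := fun t ↦ (y t ^ n)⁻¹) hI (fun r hr ↦ ?_) hs ht
  have hr0 := hne r hr
  refine (((hy r hr).fun_pow n).fun_inv (pow_ne_zero n hr0)).congr_deriv ?_
  cases n with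
  | zero => simp
  | succ m =>
    rw [Nat.add_sub_cancel]
    field_simp
    ring

theorem eq_mul_rpow_of_bernoulli {y : ℝ → ℝ} {k : ℝ} {n : ℕ} (hn : n ≠ 0) {I : Set ℝ}
    (hI : Convex ℝ I) (hne : ∀ t ∈ I, y t ≠ 0)
    (hy : ∀ t ∈ I, HasDerivWithinAt y (-k * y t ^ (n + 1)) I t) {s t : ℝ} (hs : s ∈ I)
    (ht : t ∈ I) : y t = y s * (1 + n * k * y s ^ n * (t - s)) ^ (-1 / n : ℝ) := by
  have hs0 := hne s hs
  have hpos : 0 < y s / y t :=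
    div_pos_of_continuousOn_of_ne_zero hI.isPreconnected
      (fun r hr ↦ (hy r hr).continuousWithinAt) hne hs ht
  have hpow : 1 + n * k * y s ^ n * (t - s) = (y s / y t) ^ n := by
    rw [div_pow, div_eq_mul_inv, inv_pow_eq_of_bernoulli hI hne hy hs ht]
    field_simp
  rw [hpow, neg_div, Real.rpow_neg (pow_nonneg hpos.le n), one_div,
    Real.pow_rpow_inv_natCast hpos.le hn, inv_div, mul_div_cancel₀ _ hs0]

/-- The Ricci flow equations on a time domain `I` for the diagonal left-invariant metrics
`A θ₁² + B θ₂² + C θ₃² + D θ₄²` of the class U3I2. The components are only required not to vanish,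
so that metrics of any signature are included, and derivatives are taken within `I`, so that the
flow may be defined on any time interval. -/
structure IsU3I2RicciFlow (A B C D : ℝ → ℝ) (I : Set ℝ) : Prop where
  A_ne_zero : ∀ t ∈ I, A t ≠ 0
  B_ne_zero : ∀ t ∈ I, B t ≠ 0
  C_ne_zero : ∀ t ∈ I, C t ≠ 0
  D_ne_zero : ∀ t ∈ I, D t ≠ 0
  hasDerivWithinAt_A : ∀ t ∈ I, HasDerivWithinAt A (C t / B t + B t / C t - 2) I t
  hasDerivWithinAt_B : ∀ t ∈ I,
    HasDerivWithinAt B (-(B t ^ 2) / (A t * C t) + C t / A t + D t / C t) I t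
  hasDerivWithinAt_C : ∀ t ∈ I,
    HasDerivWithinAt C (-(C t ^ 2) / (A t * B t) + B t / A t + D t / B t) I t
  hasDerivWithinAt_D : ∀ t ∈ I, HasDerivWithinAt D (-(D t ^ 2) / (B t * C t)) I t

namespace IsU3I2RicciFlow

variable {A B C D : ℝ → ℝ} {I : Set ℝ} {s t : ℝ}

theorem hasDerivWithinAt_B_mul_C (h : IsU3I2RicciFlow A B C D I) (ht : t ∈ I) :
    HasDerivWithinAt (fun r ↦ B r * C r) (2 * D t) I t := by
  have hA := h.A_ne_zero t ht
  have hB := h.B_ne_zero t ht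
  have hC := h.C_ne_zero t ht
  refine ((h.hasDerivWithinAt_B t ht).fun_mul (h.hasDerivWithinAt_C t ht)).congr_deriv ?_
  field_simp
  ring

theorem hasDerivWithinAt_B_add_C (h : IsU3I2RicciFlow A B C D I) (ht : t ∈ I) :
    HasDerivWithinAt (fun r ↦ B r + C r)
      ((A t * D t - (B t - C t) ^ 2) / (A t * B t * C t) * (B t + C t)) I t := by
  have hA := h.A_ne_zero t ht
  have hB := h.B_ne_zero t ht
  have hC := h.C_ne_zero t ht
  refine ((h.hasDerivWithinAt_B t ht).fun_add (h.hasDerivWithinAt_C t ht)).congr_deriv ?_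
  field_simp
  ring

theorem hasDerivWithinAt_A_mul_D (h : IsU3I2RicciFlow A B C D I) (ht : t ∈ I) :
    HasDerivWithinAt (fun r ↦ A r * D r)
      (-((A t * D t - (B t - C t) ^ 2) / (A t * B t * C t)) * (A t * D t)) I t := by
  have hA := h.A_ne_zero t ht
  have hB := h.B_ne_zero t ht
  have hC := h.C_ne_zero t ht
  refine ((h.hasDerivWithinAt_A t ht).fun_mul (h.hasDerivWithinAt_D t ht)).congr_deriv ?_
  field_simp
  ring

theorem B_mul_C_mul_D_sq_eq (h : IsU3I2RicciFlow A B C D I) (hI : Convex ℝ I) (hs : s ∈ I)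
    (ht : t ∈ I) : B t * C t * D t ^ 2 = B s * C s * D s ^ 2 := by
  refine eq_of_hasDerivWithinAt_zero_s16 (f := fun r ↦ B r * C r * D r ^ 2) hI (fun r hr ↦ ?_) hs ht
  have hB := h.B_ne_zero r hr
  have hC := h.C_ne_zero r hr
  refine ((h.hasDerivWithinAt_B_mul_C hr).fun_mul
    ((h.hasDerivWithinAt_D r hr).fun_pow 2)).congr_deriv ?_
  field_simp
  ring

theorem A_mul_D_mul_B_add_C_eq (h : IsU3I2RicciFlow A B C D I) (hI : Convex ℝ I) (hs : s ∈ I)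
    (ht : t ∈ I) : A t * D t * (B t + C t) = A s * D s * (B s + C s) := by
  refine eq_of_hasDerivWithinAt_zero_s16 (f := fun r ↦ A r * D r * (B r + C r)) hI
    (fun r hr ↦ ?_) hs ht
  refine ((h.hasDerivWithinAt_A_mul_D hr).fun_mul
    (h.hasDerivWithinAt_B_add_C hr)).congr_deriv ?_
  ring

theorem hasDerivWithinAt_D_bernoulli (h : IsU3I2RicciFlow A B C D I) (hI : Convex ℝ I)
    (hs : s ∈ I) (ht : t ∈ I) :
    HasDerivWithinAt D (-(B s * C s * D s ^ 2)⁻¹ * D t ^ 4) I t := by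
  have hB := h.B_ne_zero t ht
  have hC := h.C_ne_zero t ht
  have hD := h.D_ne_zero t ht
  refine (h.hasDerivWithinAt_D t ht).congr_deriv ?_
  rw [← h.B_mul_C_mul_D_sq_eq hI hs ht]
  field_simp

theorem D_eq (h : IsU3I2RicciFlow A B C D I) (hI : Convex ℝ I) (hs : s ∈ I) (ht : t ∈ I) :
    D t = D s * (1 + 3 * D s / (B s * C s) * (t - s)) ^ (-(1 : ℝ) / 3) := by
  have hD := h.D_ne_zero s hs
  have hcoeff : 3 * (B s * C s * D s ^ 2)⁻¹ * D s ^ 3 = 3 * D s / (B s * C s) := by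
    field_simp
  have hsol := eq_mul_rpow_of_bernoulli three_ne_zero hI h.D_ne_zero
    (fun r hr ↦ h.hasDerivWithinAt_D_bernoulli hI hs hr) hs ht
  rwa [Nat.cast_ofNat, hcoeff] at hsol

end IsU3I2RicciFlow

theorem stmt16_general {A B C D : ℝ → ℝ} {I : Set ℝ} (h : IsU3I2RicciFlow A B C D I)
    (hI : Convex ℝ I) {s : ℝ} (hs : s ∈ I) :
    (∀ t ∈ I, B t * C t * D t ^ 2 = B s * C s * D s ^ 2) ∧
    (∀ t ∈ I, A t * D t * (B t + C t) = A s * D s * (B s + C s)) ∧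
    (∀ t ∈ I, D t = D s * (1 + 3 * D s / (B s * C s) * (t - s)) ^ (-(1 : ℝ) / 3)) :=
  ⟨fun _ ↦ h.B_mul_C_mul_D_sq_eq hI hs, fun _ ↦ h.A_mul_D_mul_B_add_C_eq hI hs,
    fun _ ↦ h.D_eq hI hs⟩

/-- Ricci flow on the class U3I2 (family of Proposition 7): conserved
quantities `BCD² = λ2λ3λ4²`, `AD(B+C) = λ1λ4(λ2+λ3)`, and the explicit
formula for `D`. -/
theorem stmt16 (l1 l2 l3 l4 : ℝ)
    (hl1 : 0 < l1) (hl2 : 0 < l2) (hl3 : 0 < l3) (hl4 : 0 < l4)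
    (A B C D : ℝ → ℝ)
    (hA0 : A 0 = l1) (hB0 : B 0 = l2) (hC0 : C 0 = l3) (hD0 : D 0 = l4)
    (hApos : ∀ t ≥ (0 : ℝ), 0 < A t)
    (hBpos : ∀ t ≥ (0 : ℝ), 0 < B t)
    (hCpos : ∀ t ≥ (0 : ℝ), 0 < C t)
    (hDpos : ∀ t ≥ (0 : ℝ), 0 < D t)
    (hA' : ∀ t ≥ (0 : ℝ), HasDerivAt A (C t / B t + B t / C t - 2) t)
    (hB' : ∀ t ≥ (0 : ℝ), HasDerivAt B
      (-(B t ^ 2) / (A t * C t) + C t / A t + D t / C t) t)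
    (hC' : ∀ t ≥ (0 : ℝ), HasDerivAt C
      (-(C t ^ 2) / (A t * B t) + B t / A t + D t / B t) t)
    (hD' : ∀ t ≥ (0 : ℝ), HasDerivAt D (-(D t ^ 2) / (B t * C t)) t) :
    (∀ t ≥ (0 : ℝ), B t * C t * D t ^ 2 = l2 * l3 * l4 ^ 2) ∧
    (∀ t ≥ (0 : ℝ), A t * D t * (B t + C t) = l1 * l4 * (l2 + l3)) ∧
    (∀ t ≥ (0 : ℝ), D t = l4 * (1 + (3 * l4 / (l2 * l3)) * t) ^ (-(1 : ℝ) / 3)) := by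
  subst hA0 hB0 hC0 hD0
  have h : IsU3I2RicciFlow A B C D (Ici 0) :=
    ⟨fun t ht ↦ (hApos t ht).ne', fun t ht ↦ (hBpos t ht).ne', fun t ht ↦ (hCpos t ht).ne',
      fun t ht ↦ (hDpos t ht).ne', fun t ht ↦ (hA' t ht).hasDerivWithinAt,
      fun t ht ↦ (hB' t ht).hasDerivWithinAt, fun t ht ↦ (hC' t ht).hasDerivWithinAt,
      fun t ht ↦ (hD' t ht).hasDerivWithinAt⟩
  simpa only [mem_Ici, sub_zero] using stmt16_general h (convex_Ici 0) self_mem_Ici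
end

section
/- Let λ1, λ2, λ3, λ4 > 0 and set k4 = λ1(λ2 + λ3)/√(λ2λ3), so that λ1 ≤ k4/2. Suppose A, B, C, D : [0,∞) → ℝ are differentiable, strictly positive, and satisfy A' = C/B + B/C - 2, B' = -B²/(AC) + C/A + D/C, C' = -C²/(AB) + B/A + D/B, D' = -D²/(BC), with A(0) = λ1, B(0) = λ2, C(0) = λ3, D(0) = λ4. Then A satisfies A'(t) = k4²/A(t)² - 4 for all t ≥ 0; consequently A is nondecreasing, λ1 ≤ A(t) ≤ k4/2 for all t ≥ 0, and A(t) → k4/2 as t → ∞. -/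
open Filter

/-!
In `B'/B` and `C'/C` the variable `D` enters through the same term `D / (B C)`, so it cancels in the
logarithmic derivative of `r = B / C`, and `(A, r)` solves a closed planar system. That system has
the first integral `A (1 + r) / √r = k₄`. Since `A' = (1 - r)² / r` and `k₄² / A² = (1 + r)² / r`,
the equation `A' = k₄² / A² - 4` follows. The bound `A ≤ k₄ / 2` is the AM-GM inequality
`2 √r ≤ 1 + r`. Finally, `A` is nondecreasing and bounded, so it has a limit `L > 0`, and `A'` tends
to `k₄² / L² - 4`; a convergent function cannot have a nonzero limiting derivative, so `L = k₄ / 2`.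
-/

open Set Topology

theorem tendsto_add_one_sub_of_tendsto_deriv {E : Type*} [NormedAddCommGroup E] [NormedSpace ℝ E]
    {f f' : ℝ → E} {c : E} (hf : ∀ᶠ t in atTop, HasDerivAt f (f' t) t)
    (hf' : Tendsto f' atTop (𝓝 c)) : Tendsto (fun t => f (t + 1) - f t) atTop (𝓝 c) := by
  refine Metric.nhds_basis_closedBall.tendsto_right_iff.2 fun ε hε => ?_
  have hclose : ∀ᶠ t in atTop, ‖f' t - c‖ ≤ ε := by
    simpa only [mem_closedBall_iff_norm] using
      hf'.eventually_mem (Metric.closedBall_mem_nhds c hε)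
  obtain ⟨T, hT⟩ := eventually_atTop.1 (hf.and hclose)
  filter_upwards [eventually_ge_atTop T] with t ht
  have hderiv : ∀ s ∈ Ici T, HasDerivWithinAt (fun u => f u - u • c) (f' s - c) (Ici T) s :=
    fun s hs => by
      simpa only [one_smul] using
        ((hT s hs).1.fun_sub ((hasDerivAt_id' s).smul_const c)).hasDerivWithinAt
  have hmean : ‖(f (t + 1) - (t + 1) • c) - (f t - t • c)‖ ≤ ε * ‖t + 1 - t‖ :=
    (convex_Ici T).norm_image_sub_le_of_norm_hasDerivWithin_le hderiv (fun s hs => (hT s hs).2)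
      ht (mem_Ici.2 (by linarith))
  have hsplit : (f (t + 1) - (t + 1) • c) - (f t - t • c) = f (t + 1) - f t - c := by module
  simpa only [hsplit, add_sub_cancel_left, norm_one, mul_one, mem_closedBall_iff_norm] using hmean

theorem eq_zero_of_tendsto_of_tendsto_deriv {E : Type*} [NormedAddCommGroup E] [NormedSpace ℝ E]
    {f f' : ℝ → E} {l c : E} (hf : ∀ᶠ t in atTop, HasDerivAt f (f' t) t)
    (hl : Tendsto f atTop (𝓝 l)) (hc : Tendsto f' atTop (𝓝 c)) : c = 0 := by
  have hshift : Tendsto (fun t => f (t + 1)) atTop (𝓝 l) :=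
    hl.comp (tendsto_atTop_add_const_right atTop 1 tendsto_id)
  have hzero : Tendsto (fun t => f (t + 1) - f t) atTop (𝓝 0) := by
    simpa only [sub_self] using hshift.sub hl
  exact tendsto_nhds_unique (tendsto_add_one_sub_of_tendsto_deriv hf hc) hzero

theorem tendsto_atTop_ciSup_of_monotoneOn_Ici {α β : Type*} [LinearOrder α]
    [ConditionallyCompleteLinearOrder β] [TopologicalSpace β] [SupConvergenceClass β]
    {f : α → β} {a : α} (hf : MonotoneOn f (Ici a)) (hbdd : BddAbove (f '' Ici a)) :
    Tendsto f atTop (𝓝 (⨆ x : Ici a, f x)) :=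
  tendsto_comp_val_Ici_atTop.1 <|
    tendsto_atTop_ciSup (monotoneOn_iff_monotone.1 hf) (by rwa [← image_eq_range])

/-- The value `a (1 + r) / √r` of the first integral of the planar system `IsReducedFlow`; it is the
constant `k₄` of the Ricci flow, written in terms of `a = A` and the ratio `r = B / C`. -/
noncomputable def flowLevel (a r : ℝ) : ℝ := a * (1 + r) / √r

theorem flowLevel_div (a : ℝ) {b c : ℝ} (hb : 0 < b) (hc : 0 < c) :
    flowLevel a (b / c) = a * (b + c) / √(b * c) := by
  have hsqrt : √(b / c) = √(b * c) / c := by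
    rw [show b / c = b * c / c ^ 2 by field_simp, Real.sqrt_div' _ (sq_nonneg c),
      Real.sqrt_sq hc.le]
  rw [flowLevel, hsqrt]
  field_simp
  ring

theorem two_mul_le_flowLevel {a r : ℝ} (ha : 0 ≤ a) (hr : 0 < r) : 2 * a ≤ flowLevel a r := by
  have amgm : 2 * √r ≤ 1 + r := by nlinarith [sq_nonneg (√r - 1), Real.sq_sqrt hr.le]
  rw [flowLevel, le_div_iff₀ (Real.sqrt_pos.2 hr)]
  calc 2 * a * √r = a * (2 * √r) := by ring
    _ ≤ a * (1 + r) := mul_le_mul_of_nonneg_left amgm ha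

theorem flowLevel_sq_div_sq_sub_four {a r : ℝ} (ha : a ≠ 0) (hr : 0 < r) :
    flowLevel a r ^ 2 / a ^ 2 - 4 = (1 - r) ^ 2 / r := by
  rw [flowLevel, div_pow, Real.sq_sqrt hr.le]
  field_simp
  ring

/-- The planar system satisfied by the component `A` and the ratio `r = B / C` along the Ricci flow,
for times in `[0, ∞)`. Derivatives are two-sided, also at time `0`. -/
structure IsReducedFlow (A r : ℝ → ℝ) : Prop where
  pos : ∀ t ≥ 0, 0 < A t
  ratio_pos : ∀ t ≥ 0, 0 < r t
  hasDerivAt : ∀ t ≥ 0, HasDerivAt A ((1 - r t) ^ 2 / r t) t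
  hasDerivAt_ratio : ∀ t ≥ 0, HasDerivAt r (2 * (1 - r t ^ 2) / A t) t

namespace IsReducedFlow

variable {A r : ℝ → ℝ} {t : ℝ}

theorem hasDerivAt_flowLevel (h : IsReducedFlow A r) (ht : 0 ≤ t) :
    HasDerivAt (fun s => flowLevel (A s) (r s)) 0 t := by
  have hA := (h.pos t ht).ne'
  have hr := h.ratio_pos t ht
  have hsqrt := (Real.sqrt_pos.2 hr).ne'
  have hquot := ((h.hasDerivAt t ht).fun_mul ((h.hasDerivAt_ratio t ht).const_add 1)).fun_div
    ((h.hasDerivAt_ratio t ht).sqrt hr.ne') hsqrt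
  refine hquot.congr_deriv ?_
  -- Writing `r` as `(√r) ^ 2` makes the goal rational in `√r`.
  rw [← Real.sq_sqrt hr.le, Real.sqrt_sq (Real.sqrt_nonneg _)]
  field_simp
  ring

theorem flowLevel_eq (h : IsReducedFlow A r) (ht : 0 ≤ t) :
    flowLevel (A t) (r t) = flowLevel (A 0) (r 0) :=
  constant_of_has_deriv_right_zero
    (fun _ hs => (h.hasDerivAt_flowLevel hs.1).continuousAt.continuousWithinAt)
    (fun _ hs => (h.hasDerivAt_flowLevel hs.1).hasDerivWithinAt) t ⟨ht, le_rfl⟩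

theorem hasDerivAt_autonomous (h : IsReducedFlow A r) (ht : 0 ≤ t) :
    HasDerivAt A (flowLevel (A 0) (r 0) ^ 2 / A t ^ 2 - 4) t := by
  rw [← h.flowLevel_eq ht, flowLevel_sq_div_sq_sub_four (h.pos t ht).ne' (h.ratio_pos t ht)]
  exact h.hasDerivAt t ht

theorem monotoneOn (h : IsReducedFlow A r) : MonotoneOn A (Ici 0) := by
  refine monotoneOn_of_hasDerivWithinAt_nonneg (convex_Ici 0)
    (fun t ht => (h.hasDerivAt t ht).continuousAt.continuousWithinAt)
    (fun t ht => (h.hasDerivAt t (interior_subset ht)).hasDerivWithinAt) fun t ht => ?_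
  exact div_nonneg (sq_nonneg _) (h.ratio_pos t (interior_subset ht)).le

theorem le_half_flowLevel (h : IsReducedFlow A r) (ht : 0 ≤ t) :
    A t ≤ flowLevel (A 0) (r 0) / 2 := by
  have hlevel := two_mul_le_flowLevel (h.pos t ht).le (h.ratio_pos t ht)
  rw [h.flowLevel_eq ht] at hlevel
  linarith

theorem tendsto_half_flowLevel (h : IsReducedFlow A r) :
    Tendsto A atTop (𝓝 (flowLevel (A 0) (r 0) / 2)) := by
  set k := flowLevel (A 0) (r 0)
  have hbdd : BddAbove (A '' Ici 0) :=
    ⟨k / 2, forall_mem_image.2 fun _ ht => h.le_half_flowLevel ht⟩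
  obtain ⟨L, hL⟩ : ∃ L, Tendsto A atTop (𝓝 L) :=
    ⟨_, tendsto_atTop_ciSup_of_monotoneOn_Ici h.monotoneOn hbdd⟩
  have hL_pos : 0 < L := (h.pos 0 le_rfl).trans_le <| ge_of_tendsto hL <|
    (eventually_ge_atTop 0).mono fun t ht => h.monotoneOn self_mem_Ici ht ht
  have hk_pos : 0 < k := by linarith [h.pos 0 le_rfl, h.le_half_flowLevel le_rfl]
  have hlim : Tendsto (fun t => k ^ 2 / A t ^ 2 - 4) atTop (𝓝 (k ^ 2 / L ^ 2 - 4)) :=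
    (tendsto_const_nhds.div (hL.pow 2) (by positivity)).sub_const 4
  have hstationary : k ^ 2 / L ^ 2 - 4 = 0 :=
    eq_zero_of_tendsto_of_tendsto_deriv
      ((eventually_ge_atTop 0).mono fun t ht => h.hasDerivAt_autonomous ht) hL hlim
  have hsq : L ^ 2 = (k / 2) ^ 2 := by
    field_simp at hstationary
    linarith
  rwa [← (sq_eq_sq₀ hL_pos.le (by positivity)).1 hsq]

end IsReducedFlow

theorem hasDerivAt_div_of_flow {B C : ℝ → ℝ} {a d t : ℝ} (hB : B t ≠ 0) (hC : C t ≠ 0)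
    (hB' : HasDerivAt B (-(B t ^ 2) / (a * C t) + C t / a + d / C t) t)
    (hC' : HasDerivAt C (-(C t ^ 2) / (a * B t) + B t / a + d / B t) t) :
    HasDerivAt (fun s => B s / C s) (2 * (1 - (B t / C t) ^ 2) / a) t := by
  refine (hB'.fun_div hC' hC).congr_deriv ?_
  field_simp
  ring

theorem isReducedFlow_of_flow {A B C D : ℝ → ℝ}
    (hApos : ∀ t ≥ 0, 0 < A t) (hBpos : ∀ t ≥ 0, 0 < B t) (hCpos : ∀ t ≥ 0, 0 < C t)
    (hA' : ∀ t ≥ 0, HasDerivAt A (C t / B t + B t / C t - 2) t)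
    (hB' : ∀ t ≥ 0, HasDerivAt B (-(B t ^ 2) / (A t * C t) + C t / A t + D t / C t) t)
    (hC' : ∀ t ≥ 0, HasDerivAt C (-(C t ^ 2) / (A t * B t) + B t / A t + D t / B t) t) :
    IsReducedFlow A (fun t => B t / C t) where
  pos := hApos
  ratio_pos t ht := div_pos (hBpos t ht) (hCpos t ht)
  hasDerivAt t ht := by
    have hB := (hBpos t ht).ne'
    have hC := (hCpos t ht).ne'
    refine (hA' t ht).congr_deriv ?_
    field_simp
    ring
  hasDerivAt_ratio t ht :=
    hasDerivAt_div_of_flow (hBpos t ht).ne' (hCpos t ht).ne' (hB' t ht) (hC' t ht)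

theorem stmt17_general {k4 : ℝ} {A B C D : ℝ → ℝ}
    (hk4 : k4 = A 0 * (B 0 + C 0) / √(B 0 * C 0))
    (hApos : ∀ t ≥ 0, 0 < A t) (hBpos : ∀ t ≥ 0, 0 < B t) (hCpos : ∀ t ≥ 0, 0 < C t)
    (hA' : ∀ t ≥ 0, HasDerivAt A (C t / B t + B t / C t - 2) t)
    (hB' : ∀ t ≥ 0, HasDerivAt B (-(B t ^ 2) / (A t * C t) + C t / A t + D t / C t) t)
    (hC' : ∀ t ≥ 0, HasDerivAt C (-(C t ^ 2) / (A t * B t) + B t / A t + D t / B t) t) :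
    A 0 ≤ k4 / 2 ∧
    (∀ t ≥ 0, deriv A t = k4 ^ 2 / A t ^ 2 - 4) ∧
    MonotoneOn A (Ici 0) ∧
    (∀ t ≥ 0, A 0 ≤ A t ∧ A t ≤ k4 / 2) ∧
    Tendsto A atTop (𝓝 (k4 / 2)) := by
  have h := isReducedFlow_of_flow hApos hBpos hCpos hA' hB' hC'
  obtain rfl : flowLevel (A 0) (B 0 / C 0) = k4 :=
    (flowLevel_div _ (hBpos 0 le_rfl) (hCpos 0 le_rfl)).trans hk4.symm
  exact ⟨h.le_half_flowLevel le_rfl,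
    fun t ht => (h.hasDerivAt_autonomous ht).deriv,
    h.monotoneOn,
    fun t ht => ⟨h.monotoneOn self_mem_Ici ht ht, h.le_half_flowLevel ht⟩,
    h.tendsto_half_flowLevel⟩

/-- Ricci flow on the class U3I2 (family of Proposition 7):
`A' = k4²/A² - 4`, so `A` is nondecreasing, bounded between `λ1` and `k4/2`,
and converges to `k4/2`. -/
theorem stmt17 (l1 l2 l3 l4 k4 : ℝ)
    (hl1 : 0 < l1) (hl2 : 0 < l2) (hl3 : 0 < l3) (hl4 : 0 < l4)
    (hk4 : k4 = l1 * (l2 + l3) / Real.sqrt (l2 * l3))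
    (A B C D : ℝ → ℝ)
    (hA0 : A 0 = l1) (hB0 : B 0 = l2) (hC0 : C 0 = l3) (hD0 : D 0 = l4)
    (hApos : ∀ t ≥ (0 : ℝ), 0 < A t)
    (hBpos : ∀ t ≥ (0 : ℝ), 0 < B t)
    (hCpos : ∀ t ≥ (0 : ℝ), 0 < C t)
    (hDpos : ∀ t ≥ (0 : ℝ), 0 < D t)
    (hA' : ∀ t ≥ (0 : ℝ), HasDerivAt A (C t / B t + B t / C t - 2) t)
    (hB' : ∀ t ≥ (0 : ℝ), HasDerivAt B
      (-(B t ^ 2) / (A t * C t) + C t / A t + D t / C t) t)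
    (hC' : ∀ t ≥ (0 : ℝ), HasDerivAt C
      (-(C t ^ 2) / (A t * B t) + B t / A t + D t / B t) t)
    (hD' : ∀ t ≥ (0 : ℝ), HasDerivAt D (-(D t ^ 2) / (B t * C t)) t) :
    l1 ≤ k4 / 2 ∧
    (∀ t ≥ (0 : ℝ), deriv A t = k4 ^ 2 / A t ^ 2 - 4) ∧
    MonotoneOn A (Set.Ici (0 : ℝ)) ∧
    (∀ t ≥ (0 : ℝ), l1 ≤ A t ∧ A t ≤ k4 / 2) ∧
    Tendsto A atTop (nhds (k4 / 2)) := by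
  subst hA0 hB0 hC0
  exact stmt17_general hk4 hApos hBpos hCpos hA' hB' hC'
end

section
/- Let a3 ∈ ℝ. Suppose A, B, C, D : [0,∞) → ℝ are differentiable, strictly positive, and satisfy A' = ((B+C)² - A²)/(BC) + a3²(B² - A²)/(BD), B' = ((A+C)² - B²)/(AC) + a3²(A² - B²)/(AD), C' = ((A-B)² - C²)/(AB), D' = a3²(A+B)²/(AB). Then the function A - B satisfies (A - B)'(t) = [ (C(t)² - (A(t)+B(t))²)/(A(t)B(t)C(t)) - a3²(A(t)+B(t))²/(A(t)B(t)D(t)) ]·(A(t) - B(t)) for all t ≥ 0. In particular, if A(0) = B(0), then A(t) = B(t) for all t ≥ 0. -/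
/-!
With `m = 1 / C + a₃² / D`, the equations read `A' = 2 + C / B + m (B² - A²) / B` and
`B' = 2 + C / A + m (A² - B²) / A`. In `A' B - A B'` the contributions of `C / B` and `C / A`
cancel, leaving `-2 (A - B) (1 + m (A + B))`, so `A / B` always moves towards `1`: the distance
`|A / B - 1|` is nonincreasing, and if it vanishes initially it vanishes forever.
-/

open Set

theorem antitoneOn_norm_of_inner_deriv_nonpos {E : Type*} [NormedAddCommGroup E]
    [InnerProductSpace ℝ E] {s : Set ℝ} (hs : Convex ℝ s) {f f' : ℝ → E}
    (hf : ∀ t ∈ s, HasDerivWithinAt f (f' t) s t)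
    (hinner : ∀ t ∈ s, inner ℝ (f t) (f' t) ≤ 0) :
    AntitoneOn (fun t => ‖f t‖) s := by
  have hsq : AntitoneOn (fun t => ‖f t‖ ^ 2) s :=
    antitoneOn_of_hasDerivWithinAt_nonpos hs
      (fun t ht => (hf t ht).norm_sq.continuousWithinAt)
      (fun t ht => (hf t (interior_subset ht)).norm_sq.mono interior_subset)
      (fun t ht => mul_nonpos_of_nonneg_of_nonpos zero_le_two (hinner t (interior_subset ht)))
  intro t ht u hu htu
  exact (sq_le_sq₀ (norm_nonneg _) (norm_nonneg _)).mp (hsq ht hu htu)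

/-- The velocity of the coefficient `x` of `ω₁²` under the Ricci flow of the metric
`x ω₁² + y ω₂² + z ω₃² + w ω₄²`, where `a` is the parameter `a₃` of the diagonalization. The
velocity of the coefficient of `ω₂²` is obtained by exchanging `x` and `y`. -/
noncomputable def ricciVelocity (a x y z w : ℝ) : ℝ :=
  ((y + z) ^ 2 - x ^ 2) / (y * z) + a ^ 2 * (y ^ 2 - x ^ 2) / (y * w)

namespace ricciVelocity

section Algebra

variable {a x y z w : ℝ}

theorem sub_swap (hx : x ≠ 0) (hy : y ≠ 0) (hz : z ≠ 0) (hw : w ≠ 0) :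
    ricciVelocity a x y z w - ricciVelocity a y x z w =
      ((z ^ 2 - (x + y) ^ 2) / (x * y * z) - a ^ 2 * (x + y) ^ 2 / (x * y * w)) * (x - y) := by
  unfold ricciVelocity
  field_simp
  ring

theorem mul_sub_mul_swap (hx : x ≠ 0) (hy : y ≠ 0) (hz : z ≠ 0) (hw : w ≠ 0) :
    ricciVelocity a x y z w * y - x * ricciVelocity a y x z w =
      -(2 * (1 + (1 / z + a ^ 2 / w) * (x + y))) * (x - y) := by
  unfold ricciVelocity
  field_simp
  ring

end Algebra

variable {a : ℝ} {A B C D : ℝ → ℝ} {s : Set ℝ}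

theorem antitoneOn_abs_div_sub_one (hs : Convex ℝ s)
    (hApos : ∀ t ∈ s, 0 < A t) (hBpos : ∀ t ∈ s, 0 < B t)
    (hCpos : ∀ t ∈ s, 0 < C t) (hDpos : ∀ t ∈ s, 0 < D t)
    (hA' : ∀ t ∈ s, HasDerivWithinAt A (ricciVelocity a (A t) (B t) (C t) (D t)) s t)
    (hB' : ∀ t ∈ s, HasDerivWithinAt B (ricciVelocity a (B t) (A t) (C t) (D t)) s t) :
    AntitoneOn (fun t => |A t / B t - 1|) s := by
  refine antitoneOn_norm_of_inner_deriv_nonpos hs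
    (fun t ht => ((hA' t ht).fun_div (hB' t ht) (hBpos t ht).ne').sub_const 1) fun t ht => ?_
  have hA := hApos t ht
  have hB := hBpos t ht
  have hC := hCpos t ht
  have hD := hDpos t ht
  set k := 2 * (1 + (1 / C t + a ^ 2 / D t) * (A t + B t))
  have hk : 0 ≤ k := by positivity
  rw [mul_sub_mul_swap hA.ne' hB.ne' hC.ne' hD.ne', Real.inner_apply]
  calc (A t / B t - 1) * (-k * (A t - B t) / B t ^ 2)
      = -(k * (A t / B t - 1) ^ 2 / B t) := by field_simp
    _ ≤ 0 := neg_nonpos.mpr (div_nonneg (mul_nonneg hk (sq_nonneg _)) hB.le)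

theorem eqOn_Ici {t₀ : ℝ}
    (hApos : ∀ t ≥ t₀, 0 < A t) (hBpos : ∀ t ≥ t₀, 0 < B t)
    (hCpos : ∀ t ≥ t₀, 0 < C t) (hDpos : ∀ t ≥ t₀, 0 < D t)
    (hA' : ∀ t ≥ t₀, HasDerivWithinAt A (ricciVelocity a (A t) (B t) (C t) (D t)) (Ici t₀) t)
    (hB' : ∀ t ≥ t₀, HasDerivWithinAt B (ricciVelocity a (B t) (A t) (C t) (D t)) (Ici t₀) t)
    (h₀ : A t₀ = B t₀) : EqOn A B (Ici t₀) := by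
  intro t ht
  have hdist : |A t / B t - 1| ≤ |A t₀ / B t₀ - 1| :=
    antitoneOn_abs_div_sub_one (convex_Ici t₀) hApos hBpos hCpos hDpos hA' hB' self_mem_Ici ht ht
  rw [h₀, div_self (hBpos t₀ le_rfl).ne', sub_self, abs_zero, abs_nonpos_iff, sub_eq_zero] at hdist
  exact (div_eq_one_iff_eq (hBpos t ht).ne').mp hdist

end ricciVelocity

theorem stmt18_general (a3 : ℝ) (A B C D : ℝ → ℝ)
    (hApos : ∀ t ≥ (0 : ℝ), 0 < A t)
    (hBpos : ∀ t ≥ (0 : ℝ), 0 < B t)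
    (hCpos : ∀ t ≥ (0 : ℝ), 0 < C t)
    (hDpos : ∀ t ≥ (0 : ℝ), 0 < D t)
    (hA' : ∀ t ≥ (0 : ℝ), HasDerivAt A (ricciVelocity a3 (A t) (B t) (C t) (D t)) t)
    (hB' : ∀ t ≥ (0 : ℝ), HasDerivAt B (ricciVelocity a3 (B t) (A t) (C t) (D t)) t) :
    (∀ t ≥ (0 : ℝ), HasDerivAt (fun s => A s - B s)
      (((C t ^ 2 - (A t + B t) ^ 2) / (A t * B t * C t) -
        a3 ^ 2 * (A t + B t) ^ 2 / (A t * B t * D t)) * (A t - B t)) t) ∧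
    (A 0 = B 0 → ∀ t ≥ (0 : ℝ), A t = B t) := by
  constructor
  · intro t ht
    exact ((hA' t ht).sub (hB' t ht)).congr_deriv <| ricciVelocity.sub_swap
      (hApos t ht).ne' (hBpos t ht).ne' (hCpos t ht).ne' (hDpos t ht).ne'
  · intro h₀ t ht
    exact ricciVelocity.eqOn_Ici hApos hBpos hCpos hDpos
      (fun u hu => (hA' u hu).hasDerivWithinAt) (fun u hu => (hB' u hu).hasDerivWithinAt) h₀ ht

/-- Ricci flow on ŜL(2,ℝ) × ℝ (class U3S1, case (ii) of Proposition 8): the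
relation `A = B` is preserved by the flow. -/
theorem stmt18 (a3 : ℝ)
    (A B C D : ℝ → ℝ)
    (hApos : ∀ t ≥ (0 : ℝ), 0 < A t)
    (hBpos : ∀ t ≥ (0 : ℝ), 0 < B t)
    (hCpos : ∀ t ≥ (0 : ℝ), 0 < C t)
    (hDpos : ∀ t ≥ (0 : ℝ), 0 < D t)
    (hA' : ∀ t ≥ (0 : ℝ), HasDerivAt A
      (((B t + C t) ^ 2 - A t ^ 2) / (B t * C t) +
        a3 ^ 2 * (B t ^ 2 - A t ^ 2) / (B t * D t)) t)
    (hB' : ∀ t ≥ (0 : ℝ), HasDerivAt B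
      (((A t + C t) ^ 2 - B t ^ 2) / (A t * C t) +
        a3 ^ 2 * (A t ^ 2 - B t ^ 2) / (A t * D t)) t)
    (hC' : ∀ t ≥ (0 : ℝ), HasDerivAt C
      (((A t - B t) ^ 2 - C t ^ 2) / (A t * B t)) t)
    (hD' : ∀ t ≥ (0 : ℝ), HasDerivAt D
      (a3 ^ 2 * (A t + B t) ^ 2 / (A t * B t)) t) :
    (∀ t ≥ (0 : ℝ), HasDerivAt (fun s => A s - B s)
      (((C t ^ 2 - (A t + B t) ^ 2) / (A t * B t * C t) -
        a3 ^ 2 * (A t + B t) ^ 2 / (A t * B t * D t)) * (A t - B t)) t) ∧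
    (A 0 = B 0 → ∀ t ≥ (0 : ℝ), A t = B t) := by
  exact stmt18_general a3 A B C D hApos hBpos hCpos hDpos hA' hB'
end
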